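/- arXiv:1111.4047 — 2 statements merged into one kernel-verified Lean document; each statement's English description precedes it below -/
import Mathlib

section
/- (Derangement MMT) For an n×n matrix A, Σ_r (1/r!) dperm_β A(n^r,n^r) = e^{-β Tr A} / det(I-A)^β, where the sum is over all n-tuples r of non-negative integers. -/
open scoped Classical
noncomputable section


/-- Number of cycles of a permutation, counting fixed points as 1-cycles. -/
def cycleCount {α : Type*} [Fintype α] [DecidableEq α] (π : Equiv.Perm α) : ℕ :=
  (Finset.univ.filter fun x => π x = x).card + π.cycleType.card

/-- The β-extended deranged permanent: the sum runs over the fixed-point free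
permutations only. -/
def dpermB {α : Type*} [Fintype α] [DecidableEq α] {R : Type*} [CommRing R]
    (β : R) (M : Matrix α α R) : R :=
  ∑ π ∈ Finset.univ.filter (fun π : Equiv.Perm α => ∀ x, π x ≠ x),
    β ^ cycleCount π * ∏ i, M i (π i)

/-- `A(n^r, n^r)`: index `i` repeated `r i` times. -/
def repA {n : ℕ} {R : Type*} (A : Matrix (Fin n) (Fin n) R) (r : Fin n → ℕ) :
    Matrix ((i : Fin n) × Fin (r i)) ((i : Fin n) × Fin (r i)) R :=
  fun k l => A k.1 l.1

lemma path_sum {n : ℕ} (A : Matrix (Fin n) (Fin n) ℝ) (k : ℕ) : ∀ (g : Fin n → Fin n → ℝ),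
    ∑ h : Fin (k+1) → Fin n, (∏ i : Fin k, A (h i.castSucc) (h i.succ)) * g (h 0) (h (Fin.last k))
      = ∑ i, ∑ j, (A ^ k) i j * g i j := by
  induction k with
  | zero =>
    intro g
    rw [← (Equiv.funUnique (Fin 1) (Fin n)).symm.sum_comp]
    simp [Matrix.one_apply]
  | succ k ih =>
    intro g
    rw [← (Fin.consEquiv (fun _ : Fin (k+2) => Fin n)).sum_comp, Fintype.sum_prod_type]
    refine Finset.sum_congr rfl fun x _ => ?_
    have := ih (fun i j => A x i * g x j)
    simp only [Fin.consEquiv, Equiv.coe_fn_mk, Fin.prod_univ_succ, Fin.cons_succ, Fin.castSucc_zero,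
      Fin.cons_zero, ← Fin.succ_castSucc, ← Fin.succ_last]
    have e : ∀ h : Fin (k+1) → Fin n, A x (h 0) * (∏ i : Fin k, A (h i.castSucc) (h i.succ)) *
        g x (h (Fin.last k)) = (∏ i : Fin k, A (h i.castSucc) (h i.succ)) * (A x (h 0) *
        g x (h (Fin.last k))) := fun h => by ring
    rw [Finset.sum_congr rfl fun h _ => e h, this, Finset.sum_comm]
    refine Finset.sum_congr rfl fun j _ => ?_
    rw [pow_succ', Matrix.mul_apply, Finset.sum_mul]
    refine Finset.sum_congr rfl fun i _ => ?_
    ring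

lemma cyc_sum {n : ℕ} (A : Matrix (Fin n) (Fin n) ℝ) (k : ℕ) :
    ∑ h : Fin (k+1) → Fin n, ∏ i, A (h i) (h (i+1)) = (A ^ (k+1)).trace := by
  have := path_sum A k (fun i j => A j i)
  simp only [Fin.prod_univ_castSucc, Fin.last_add_one, Fin.coeSucc_eq_succ]
  rw [this, pow_succ, Matrix.trace]
  simp [Matrix.mul_apply]

lemma cycle_sum {n : ℕ} (A : Matrix (Fin n) (Fin n) ℝ) {α : Type*} [Fintype α] [DecidableEq α]
    (c : Equiv.Perm α) (hc : c.IsCycle) :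
    ∑ f : c.support → Fin n, ∏ y : c.support, A (f y) (f ⟨c y, Equiv.Perm.apply_mem_support.2 y.2⟩)
      = (A ^ c.support.card).trace := by
  obtain ⟨x, hx, _⟩ := id hc
  have hx' : x ∈ c.support := by simpa using hx
  have hco := hc.isCycleOn
  rw [← Equiv.Perm.coe_support_eq_set_support] at hco
  obtain ⟨k, hk⟩ : ∃ k, c.support.card = k + 1 := ⟨c.support.card - 1, by
    have := Finset.card_pos.2 ⟨x, hx'⟩; omega⟩
  rw [hk, ← cyc_sum]
  let e0 : Fin (k+1) → c.support := fun i => ⟨(c ^ (i:ℕ)) x, Equiv.Perm.pow_apply_mem_support.2 hx'⟩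
  have hinj : Function.Injective e0 := by
    intro i j hij
    have h := (hco.pow_apply_eq_pow_apply hx').1 (congrArg Subtype.val hij)
    rw [hk] at h
    exact Fin.ext (Nat.ModEq.eq_of_lt_of_lt h i.2 j.2)
  have hbij : Function.Bijective e0 := by
    rw [Fintype.bijective_iff_injective_and_card]
    exact ⟨hinj, by rw [Fintype.card_coe, hk, Fintype.card_fin]⟩
  let e := Equiv.ofBijective e0 hbij
  rw [← (e.arrowCongr (Equiv.refl (Fin n))).sum_comp]
  refine Finset.sum_congr rfl fun h _ => ?_
  rw [← e.prod_comp]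
  refine Finset.prod_congr rfl fun i _ => ?_
  have h1 : (⟨c (e i), Equiv.Perm.apply_mem_support.2 (e i).2⟩ : c.support) = e (i+1) := by
    apply Subtype.ext
    change c ((c ^ (i:ℕ)) x) = (c ^ ((i+1 : Fin (k+1)):ℕ)) x
    rw [← Equiv.Perm.mul_apply, ← pow_succ']
    refine (hco.pow_apply_eq_pow_apply hx').2 ?_
    rw [hk, Fin.val_add]
    simp [Nat.ModEq]
  rw [h1]
  simp [Equiv.arrowCongr]

open Equiv.Perm in
lemma perm_sum {n : ℕ} (A : Matrix (Fin n) (Fin n) ℝ) {α : Type*} [Fintype α] [DecidableEq α]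
    (π : Equiv.Perm α) (hπ : ∀ x, π x ≠ x) :
    ∑ f : α → Fin n, ∏ y, A (f y) (f (π y))
      = (π.cycleType.map fun k => (A ^ k).trace).prod := by
  -- index cycles
  let ι := {c // c ∈ π.cycleFactorsFinset}
  have hcyc : ∀ x, π.cycleOf x ∈ π.cycleFactorsFinset := fun x =>
    cycleOf_mem_cycleFactorsFinset_iff.2 (by simpa using hπ x)
  let e : α ≃ (Σ c : ι, (c : Equiv.Perm α).support) :=
    { toFun := fun x => ⟨⟨π.cycleOf x, hcyc x⟩, ⟨x, by simpa [mem_support_cycleOf_iff] using hπ x⟩⟩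
      invFun := fun p => p.2
      left_inv := fun x => rfl
      right_inv := by
        rintro ⟨⟨c, hc⟩, ⟨x, hx⟩⟩
        have : c = π.cycleOf x := (eq_cycleOf_of_mem_cycleFactorsFinset_iff _ c hc x).2 hx
        subst this
        rfl }
  have hπe : ∀ (c : ι) (y : (c : Equiv.Perm α).support), e (π y) =
      ⟨c, ⟨(c : Equiv.Perm α) y, apply_mem_support.2 y.2⟩⟩ := by
    intro c y
    rw [← Equiv.eq_symm_apply]
    exact (((mem_cycleFactorsFinset_iff.1 c.2).2 y y.2)).symm
  rw [← (Equiv.arrowCongr e.symm (Equiv.refl (Fin n))).sum_comp]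
  have h1 : ∀ f : (Σ c : ι, (c : Equiv.Perm α).support) → Fin n,
      ∏ y, A ((Equiv.arrowCongr e.symm (Equiv.refl (Fin n))) f y)
        ((Equiv.arrowCongr e.symm (Equiv.refl (Fin n))) f (π y)) =
      ∏ c : ι, ∏ y : (c : Equiv.Perm α).support,
        A (f ⟨c, y⟩) (f ⟨c, ⟨(c : Equiv.Perm α) y, apply_mem_support.2 y.2⟩⟩) := by
    intro f
    rw [← e.symm.prod_comp, Fintype.prod_sigma]
    refine Finset.prod_congr rfl fun c _ => Finset.prod_congr rfl fun y _ => ?_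
    have : e (π (e.symm ⟨c, y⟩)) = _ := hπe c y
    simp [Equiv.arrowCongr, this]
  rw [Finset.sum_congr rfl fun f _ => h1 f]
  rw [← (Equiv.piCurry (fun (c : ι) (_ : (c : Equiv.Perm α).support) => Fin n)).symm.sum_comp]
  simp only [Equiv.piCurry_symm_apply, Sigma.uncurry]
  rw [← Fintype.prod_sum (fun (c : ι) (f : (c : Equiv.Perm α).support → Fin n) =>
    ∏ y : (c : Equiv.Perm α).support,
        A (f y) (f ⟨(c : Equiv.Perm α) y, apply_mem_support.2 y.2⟩))]
  rw [cycleType_def, Multiset.map_map]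
  change _ = ∏ c ∈ π.cycleFactorsFinset, _
  rw [← Finset.prod_coe_sort π.cycleFactorsFinset]
  refine Finset.prod_congr rfl fun c _ => ?_
  exact cycle_sum A _ (mem_cycleFactorsFinset_iff.1 c.2).1

lemma cycleType_card_permCongr {α γ : Type*} [Fintype α] [DecidableEq α] [Fintype γ] [DecidableEq γ]
    (e : α ≃ γ) (π : Equiv.Perm α) : (e.permCongr π).cycleType = π.cycleType := by
  have h := Equiv.Perm.cycleType_extendDomain (p := fun _ : γ => True)
    (e.trans (Equiv.Set.univ γ).symm) (g := π)
  rw [← h]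
  congr 1

lemma dpermB_reindex {α γ : Type*} [Fintype α] [DecidableEq α] [Fintype γ] [DecidableEq γ]
    (e : α ≃ γ) (β : ℝ) (M : Matrix γ γ ℝ) :
    dpermB β (fun k l => M (e k) (e l)) = dpermB β M := by
  unfold dpermB
  refine Finset.sum_equiv e.permCongr ?_ ?_
  · intro π
    simp only [Finset.mem_filter, Finset.mem_univ, true_and, Equiv.permCongr_apply]
    constructor
    · intro h x hx
      exact h (e.symm x) (by rw [Equiv.eq_symm_apply]; exact hx)
    · intro h x hx
      exact h (e x) (by simp [hx])
  · intro π _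
    unfold cycleCount
    rw [cycleType_card_permCongr]
    congr 1
    · congr 2
      refine Finset.card_equiv e ?_
      intro x
      rw [Finset.mem_filter, Finset.mem_filter]
      simp [Equiv.permCongr_apply]
    · rw [← e.prod_comp]
      simp [Equiv.permCongr_apply]

/-- The exponential-formula coefficients. -/
def Ecoef (s : ℕ → ℝ) (N : ℕ) : ℝ :=
  ((N.factorial : ℕ) : ℝ)⁻¹ *
    ∑ π ∈ Finset.univ.filter (fun π : Equiv.Perm (Fin N) => ∀ x, π x ≠ x),
      (π.cycleType.map s).prod

lemma sum_words {n : ℕ} (A : Matrix (Fin n) (Fin n) ℝ) (β : ℝ) (N : ℕ) :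
    ∑ f : Fin N → Fin n, dpermB β (fun k l => A (f k) (f l)) =
    ∑ π ∈ Finset.univ.filter (fun π : Equiv.Perm (Fin N) => ∀ x, π x ≠ x),
      (π.cycleType.map (fun k => β * (A ^ k).trace)).prod := by
  unfold dpermB
  rw [Finset.sum_comm]
  refine Finset.sum_congr (by congr) fun π hπ => ?_
  have hπ' : ∀ x, π x ≠ x := (Finset.mem_filter.1 hπ).2
  rw [← Finset.mul_sum]
  have h := perm_sum A π hπ'
  rw [Multiset.prod_map_mul, Multiset.map_const', Multiset.prod_replicate, ← h]
  have : cycleCount π = π.cycleType.card := by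
    unfold cycleCount
    simp [hπ']
  rw [this]

lemma card_fib {n N : ℕ} (r : Fin n → ℕ) (f : Fin N → Fin n)
    (hf : ∀ i, Fintype.card {x // f x = i} = r i) :
    ∃ e : Fin N ≃ (Σ i, Fin (r i)), ∀ x, (e x).1 = f x := by
  refine ⟨(Equiv.sigmaFiberEquiv f).symm.trans
    (Equiv.sigmaCongrRight fun i => Fintype.equivFinOfCardEq (hf i)), fun x => rfl⟩

lemma card_words {n N : ℕ} (r : Fin n → ℕ) (hr : ∑ i, r i = N) :
    (Finset.univ.filter (fun f : Fin N → Fin n =>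
      (fun i => Fintype.card {x // f x = i}) = r)).card * ∏ i, (r i).factorial = N.factorial := by
  have h1 : Fintype.card (Fin N ≃ (Σ i, Fin (r i))) = N.factorial := by
    rw [Fintype.card_equiv (Fintype.equivOfCardEq (by simp [hr]))]
    simp
  rw [← h1, ← Finset.card_univ, Finset.card_eq_sum_card_fiberwise
    (f := fun (e : Fin N ≃ (Σ i, Fin (r i))) (x : Fin N) => (e x).1)
    (t := Finset.univ.filter (fun f : Fin N → Fin n =>
      (fun i => Fintype.card {x // f x = i}) = r))]
  · rw [Finset.sum_const_nat]
    intro f hf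
    have hf' : ∀ i, Fintype.card {x // f x = i} = r i := by
      intro i
      exact congrFun (Finset.mem_filter.1 hf).2 i
    obtain ⟨e0, he0⟩ := card_fib r f hf'
    have h2 := DomMulAct.stabilizer_card f
    simp only [hf'] at h2
    rw [← h2, Fintype.card_subtype]
    refine Finset.card_equiv ((Equiv.refl (Fin N)).equivCongr e0.symm) ?_
    intro e
    simp only [Finset.mem_filter, Finset.mem_univ, true_and]
    have : f ∘ ((Equiv.refl (Fin N)).equivCongr e0.symm e) = fun x => (e x).1 := by
      funext x
      simp [Equiv.equivCongr, ← he0]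
    rw [this]
  · intro e _
    simp only [Finset.coe_filter, Finset.mem_univ, true_and, Set.mem_ofPred_eq]
    funext i
    rw [Fintype.card_congr (Equiv.subtypeEquiv (q := fun p => p.1 = i) e fun a => Iff.rfl),
      Fintype.card_congr (Equiv.sigmaSubtype i)]
    simp

lemma layer_sum {n : ℕ} (A : Matrix (Fin n) (Fin n) ℝ) (β : ℝ) (N : ℕ) :
    ∑ r ∈ Finset.piAntidiag (Finset.univ : Finset (Fin n)) N,
      ((∏ i, (r i).factorial : ℕ) : ℝ)⁻¹ * dpermB β (repA A r) =
    Ecoef (fun k => β * (A ^ k).trace) N := by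
  unfold Ecoef
  rw [← sum_words]
  rw [← Finset.sum_fiberwise_of_maps_to (s := Finset.univ)
    (t := Finset.piAntidiag (Finset.univ : Finset (Fin n)) N)
    (g := fun f : Fin N → Fin n => (fun i => Fintype.card {x // f x = i})), Finset.mul_sum]
  · refine Finset.sum_congr rfl fun r hr => ?_
    have hr' : ∑ i, r i = N := by simpa using hr
    rw [Finset.sum_congr rfl (g := fun _ => dpermB β (repA A r))]
    · rw [Finset.sum_const, nsmul_eq_mul, ← card_words r hr', ← mul_assoc]
      congr 1
      have := N.factorial_pos
      rw [← card_words r hr'] at this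
      have h1 := Nat.pos_of_mul_pos_right this
      have h2 := Nat.pos_of_mul_pos_left this
      push_cast
      field_simp
    · intro f hf
      obtain ⟨e, he⟩ := card_fib r f (fun i => congrFun (Finset.mem_filter.1 hf).2 i)
      rw [← dpermB_reindex e]
      simp only [repA, he]
  · intro f _
    simp only [Finset.mem_piAntidiag, Finset.mem_univ, implies_true, and_true]
    rw [← Fintype.card_sigma, Fintype.card_congr (Equiv.sigmaFiberEquiv f)]
    simp

/-- Multisets of positive integers with given sum. -/
def Pset (N : ℕ) : Finset (Multiset ℕ) :=
  (Finset.univ : Finset (Nat.Partition N)).image Nat.Partition.parts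

lemma mem_Pset {N : ℕ} {m : Multiset ℕ} : m ∈ Pset N ↔ (∀ i ∈ m, 0 < i) ∧ m.sum = N := by
  unfold Pset
  simp only [Finset.mem_image, Finset.mem_univ, true_and]
  constructor
  · rintro ⟨p, rfl⟩
    exact ⟨fun i hi => p.parts_pos hi, p.parts_sum⟩
  · rintro ⟨h1, h2⟩
    exact ⟨⟨m, fun {i} hi => h1 i hi, h2⟩, rfl⟩

/-- Product of factorials of multiplicities. -/
def Ffac (m : Multiset ℕ) : ℕ := ∏ k ∈ m.toFinset, (m.count k).factorial

lemma Ffac_cons (k : ℕ) (m : Multiset ℕ) : Ffac (k ::ₘ m) = (m.count k + 1) * Ffac m := by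
  unfold Ffac
  have h1 : ∏ j ∈ m.toFinset, (m.count j).factorial =
      ∏ j ∈ (k ::ₘ m).toFinset, (m.count j).factorial := by
    refine Finset.prod_subset (fun j hj => by simp at hj ⊢; exact Or.inr hj) ?_
    intro j _ hj
    have : m.count j = 0 := Multiset.count_eq_zero.2 (by simpa using hj)
    simp [this]
  have hk : k ∈ (k ::ₘ m).toFinset := by simp
  rw [h1, ← Finset.mul_prod_erase _ _ hk, ← Finset.mul_prod_erase _ _ hk, ← mul_assoc,
    Multiset.count_cons_self, Nat.factorial_succ]
  congr 1
  refine Finset.prod_congr rfl fun j hj => ?_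
  rw [Multiset.count_cons_of_ne (Finset.ne_of_mem_erase hj)]

lemma Ffac_pos (m : Multiset ℕ) : 0 < Ffac m :=
  Finset.prod_pos fun _ _ => Nat.factorial_pos _

/-- Weight of a cycle type. -/
def wt (s : ℕ → ℝ) (m : Multiset ℕ) : ℝ :=
  (m.map s).prod / ((m.prod : ℕ) * (Ffac m : ℕ) : ℝ)

lemma wt_cons (s : ℕ → ℝ) (k : ℕ) (hk : 0 < k) (m : Multiset ℕ) :
    ((k ::ₘ m).count k * k : ℝ) * wt s (k ::ₘ m) = s k * wt s m := by
  unfold wt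
  rw [Ffac_cons, Multiset.map_cons, Multiset.prod_cons, Multiset.prod_cons,
    Multiset.count_cons_self]
  have h1 : (k : ℝ) ≠ 0 := by positivity
  have h2 : ((m.count k : ℝ) + 1) ≠ 0 := by positivity
  push_cast [-Nat.cast_multiset_prod]
  by_cases h3 : (m.prod : ℝ) = 0
  · simp [h3]
  have h4 : (Ffac m : ℝ) ≠ 0 := by exact_mod_cast (Ffac_pos m).ne'
  field_simp

lemma wt_rec (s : ℕ → ℝ) (m : Multiset ℕ) (hm : ∀ i ∈ m, 0 < i) :
    (m.sum : ℝ) * wt s m = ∑ k ∈ m.toFinset, s k * wt s (m.erase k) := by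
  rw [Finset.sum_multiset_count]
  push_cast
  rw [Finset.sum_mul]
  refine Finset.sum_congr rfl fun k hk => ?_
  have hk' : k ∈ m := by simpa using hk
  have h := wt_cons s k (hm k hk') (m.erase k)
  rw [Multiset.cons_erase hk'] at h
  simpa using h

lemma wtsum_rec (s : ℕ → ℝ) (N : ℕ) :
    ((N : ℝ) + 1) * ∑ m ∈ Pset (N+1), wt s m =
      ∑ p ∈ Finset.HasAntidiagonal.antidiagonal N, s (p.1 + 1) * ∑ m ∈ Pset p.2, wt s m := by
  have h1 : ((N : ℝ) + 1) * ∑ m ∈ Pset (N+1), wt s m =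
      ∑ m ∈ Pset (N+1), ∑ k ∈ m.toFinset, s k * wt s (m.erase k) := by
    rw [Finset.mul_sum]
    refine Finset.sum_congr rfl fun m hm => ?_
    rw [mem_Pset] at hm
    rw [← wt_rec s m hm.1, hm.2]
    push_cast
    rfl
  simp_rw [h1, Finset.mul_sum]
  rw [Finset.sum_sigma', Finset.sum_sigma']
  refine Finset.sum_bij'
    (fun x _ => ⟨(x.2 - 1, N - (x.2 - 1)), x.1.erase x.2⟩)
    (fun y _ => ⟨(y.1.1 + 1) ::ₘ y.2, y.1.1 + 1⟩) ?_ ?_ ?_ ?_ ?_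
  · rintro ⟨m, k⟩ h
    simp only [Finset.mem_sigma, mem_Pset, Multiset.mem_toFinset, Finset.HasAntidiagonal.mem_antidiagonal] at h ⊢
    obtain ⟨⟨h1, h2⟩, h3⟩ := h
    have h4 := h1 k h3
    have h5 := Multiset.sum_erase h3
    refine ⟨by omega, fun i hi => h1 i (Multiset.mem_of_mem_erase hi), by omega⟩
  · rintro ⟨⟨i, j⟩, m⟩ h
    simp only [Finset.mem_sigma, mem_Pset, Multiset.mem_toFinset, Finset.HasAntidiagonal.mem_antidiagonal] at h ⊢
    obtain ⟨h1, h2, h3⟩ := h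
    refine ⟨⟨?_, ?_⟩, by simp⟩
    · intro a ha
      rcases Multiset.mem_cons.1 ha with rfl | ha
      · omega
      · exact h2 a ha
    · rw [Multiset.sum_cons]; omega
  · rintro ⟨m, k⟩ h
    simp only [Finset.mem_sigma, mem_Pset, Multiset.mem_toFinset] at h
    obtain ⟨⟨h1, h2⟩, h3⟩ := h
    have h4 := h1 k h3
    simp only [Nat.sub_add_cancel h4, Multiset.cons_erase h3]
  · rintro ⟨⟨i, j⟩, m⟩ h
    simp only [Finset.mem_sigma, mem_Pset, Finset.HasAntidiagonal.mem_antidiagonal] at h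
    obtain ⟨h1, h2, h3⟩ := h
    have : N - i = j := by omega
    simp [this]
  · rintro ⟨m, k⟩ h
    simp only [Finset.mem_sigma, mem_Pset, Multiset.mem_toFinset] at h
    obtain ⟨⟨h1, h2⟩, h3⟩ := h
    have h4 := h1 k h3
    simp only [Nat.sub_add_cancel h4]

lemma derang_iff {N : ℕ} (π : Equiv.Perm (Fin N)) : (∀ x, π x ≠ x) ↔ π.cycleType.sum = N := by
  rw [Equiv.Perm.sum_cycleType]
  constructor
  · intro h
    have : π.support = Finset.univ := by ext x; simp [h x]
    simp [this]
  · intro h x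
    have : π.support = Finset.univ := Finset.eq_univ_of_card _ (by simpa using h)
    rw [← Equiv.Perm.mem_support, this]
    simp

lemma Ecoef_eq (s : ℕ → ℝ) (N : ℕ) :
    Ecoef s N = ∑ m ∈ Pset N, wt (fun k => if k = 1 then 0 else s k) m := by
  unfold Ecoef
  rw [← Finset.sum_fiberwise_of_maps_to (t := Pset N)
    (g := fun π : Equiv.Perm (Fin N) => π.cycleType), Finset.mul_sum]
  · refine Finset.sum_congr rfl fun m hm => ?_
    rw [mem_Pset] at hm
    by_cases h1 : 1 ∈ m
    · rw [Finset.sum_eq_zero]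
      · have : (m.map (fun k => if k = 1 then (0:ℝ) else s k)).prod = 0 := by
          apply Multiset.prod_eq_zero
          exact Multiset.mem_map.2 ⟨1, h1, by simp⟩
        simp [wt, this]
      · intro π hπ
        have := (Finset.mem_filter.1 hπ).2
        rw [← this] at h1
        exact absurd (Equiv.Perm.one_lt_of_mem_cycleType h1) (by simp)
    · have h2 : ∀ a ∈ m, 2 ≤ a := by
        intro a ha
        have := hm.1 a ha
        have : a ≠ 1 := fun h => h1 (h ▸ ha)
        omega
      have h3 : m.map (fun k => if k = 1 then (0:ℝ) else s k) = m.map s :=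
        Multiset.map_congr rfl fun a ha => by
          have := h2 a ha
          rw [if_neg (by omega)]
      rw [Finset.sum_congr (g := fun _ => (m.map s).prod)
        (s₂ := Finset.univ.filter fun π : Equiv.Perm (Fin N) => π.cycleType = m)]
      · have h4 := Equiv.Perm.card_of_cycleType_mul_eq (Fin N) m
        rw [if_pos ⟨by simp [hm.2], h2⟩] at h4
        simp only [Fintype.card_fin, hm.2, Nat.sub_self, Nat.factorial_zero, one_mul] at h4
        change _ * (m.prod * Ffac m) = _ at h4
        rw [Finset.sum_const, nsmul_eq_mul, wt, h3, ← h4]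
        have h5 := N.factorial_pos
        rw [← h4] at h5
        have h6 := Nat.pos_of_mul_pos_right h5
        have h7 := Nat.pos_of_mul_pos_left h5
        have h8 := Nat.pos_of_mul_pos_right h7
        have h9 := Nat.pos_of_mul_pos_left h7
        push_cast [-Nat.cast_multiset_prod]
        field_simp
      · ext π
        simp only [Finset.mem_filter, Finset.mem_univ, true_and, derang_iff]
        constructor
        · exact fun h => h.2
        · rintro rfl
          exact ⟨hm.2, rfl⟩
      · intro π hπ
        rw [(Finset.mem_filter.1 hπ).2]
  · intro π hπ
    rw [mem_Pset]
    exact ⟨fun i hi => by have := Equiv.Perm.one_lt_of_mem_cycleType hi; omega,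
      (derang_iff π).1 (Finset.mem_filter.1 hπ).2⟩

lemma Ecoef_rec (s : ℕ → ℝ) (N : ℕ) :
    ((N : ℝ) + 1) * Ecoef s (N+1) =
      ∑ p ∈ Finset.HasAntidiagonal.antidiagonal N, (if p.1 = 0 then 0 else s (p.1 + 1)) * Ecoef s p.2 := by
  simp only [Ecoef_eq]
  rw [wtsum_rec]
  simp

lemma Ecoef_zero (s : ℕ → ℝ) : Ecoef s 0 = 1 := by
  unfold Ecoef
  rw [Finset.filter_true_of_mem (fun π _ x => x.elim0)]
  simp

lemma Ecoef_bound (s : ℕ → ℝ) (K q : ℝ) (hK : 1 ≤ K) (hq : 0 ≤ q) (hKq : K * q ≤ 1/2)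
    (hs : ∀ k, |s k| ≤ K * q ^ k) (N : ℕ) : |Ecoef s N| ≤ (1/2) ^ N := by
  have hq2 : q ≤ 1/2 := by nlinarith
  induction N using Nat.strong_induction_on with
  | _ N ih =>
  rcases N with _ | N
  · simp [Ecoef_zero]
  · have h := Ecoef_rec s N
    have hN : (0:ℝ) < (N:ℝ) + 1 := by positivity
    have h1 : ((N:ℝ) + 1) * |Ecoef s (N+1)| ≤ ((N:ℝ)+1) * (1/2)^(N+1) := by
      rw [← abs_of_pos hN, ← abs_mul, h, abs_of_pos hN]
      refine (Finset.abs_sum_le_sum_abs _ _).trans ?_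
      refine (Finset.sum_le_card_nsmul _ _ ((1/2)^(N+1)) ?_).trans ?_
      · rintro ⟨i, j⟩ hij
        rw [Finset.HasAntidiagonal.mem_antidiagonal] at hij
        simp only at hij ⊢
        rw [abs_mul]
        have h2 : |if i = 0 then 0 else s (i+1)| ≤ (1/2)^(i+1) := by
          split_ifs
          · simp
          · refine (hs _).trans ?_
            have : q ^ i ≤ (1/2)^i := pow_le_pow_left₀ hq hq2 i
            calc K * q^(i+1) = (K * q) * q^i := by ring
              _ ≤ (1/2) * (1/2)^i := by gcongr
              _ = _ := by ring
        calc _ ≤ ((1:ℝ)/2)^(i+1) * (1/2)^j := by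
              gcongr
              exact ih j (by omega)
          _ = _ := by rw [← pow_add]; congr 1; omega
      · rw [Finset.Nat.card_antidiagonal, nsmul_eq_mul]
        push_cast
        exact le_rfl
    exact le_of_mul_le_mul_left h1 hN

lemma pow_entry {n : ℕ} (A : Matrix (Fin n) (Fin n) ℝ) (ε : ℝ) (hε : 0 ≤ ε)
    (h : ∀ i j, |A i j| ≤ ε) (k : ℕ) : ∀ i j, |(A ^ k) i j| ≤ (n * ε) ^ k := by
  induction k with
  | zero =>
    intro i j
    rw [pow_zero, pow_zero, Matrix.one_apply]
    split_ifs <;> simp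
  | succ k ih =>
    intro i j
    rw [pow_succ, Matrix.mul_apply]
    refine (Finset.abs_sum_le_sum_abs _ _).trans ?_
    refine (Finset.sum_le_card_nsmul _ _ ((n*ε)^k * ε) ?_).trans ?_
    · intro l _
      rw [abs_mul]
      have := ih i l
      gcongr
      exact h l j
    · simp
      apply le_of_eq
      ring

lemma trace_bound {n : ℕ} (A : Matrix (Fin n) (Fin n) ℝ) (ε : ℝ) (hε : 0 ≤ ε)
    (h : ∀ i j, |A i j| ≤ ε) (k : ℕ) : |(A ^ k).trace| ≤ n * (n * ε) ^ k := by
  rw [Matrix.trace]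
  refine (Finset.abs_sum_le_sum_abs _ _).trans ?_
  refine (Finset.sum_le_card_nsmul _ _ ((n*ε)^k) ?_).trans ?_
  · intro i _
    exact pow_entry A ε hε h k i i
  · simp

section
attribute [local instance] Matrix.linftyOpNormedRing Matrix.linftyOpNormedAlgebra

lemma geom_matrix {n : ℕ} (A : Matrix (Fin n) (Fin n) ℝ) (h : ∀ i, ∑ j, |A i j| < 1) :
    ∃ B, (1 - A) * B = 1 ∧ HasSum (fun k => A ^ k) B := by
  have hA : ‖A‖ < 1 := by
    rw [Matrix.linfty_opNorm_def]
    rw [← NNReal.coe_one, NNReal.coe_lt_coe, Finset.sup_lt_iff (by simp)]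
    intro i _
    rw [← NNReal.coe_lt_coe]
    simpa using h i
  haveI : CompleteSpace (Matrix (Fin n) (Fin n) ℝ) := FiniteDimensional.complete ℝ _
  exact ⟨∑' k, A ^ k, mul_neg_geom_series A hA,
    (summable_geometric_of_norm_lt_one hA).hasSum⟩
end

lemma det_deriv {n : ℕ} (A B : Matrix (Fin n) (Fin n) ℝ) (z₀ : ℝ) (h : (1 - z₀ • A) * B = 1) :
    HasDerivAt (fun z : ℝ => (1 - z • A).det) (-(A * B).trace * (1 - z₀ • A).det) z₀ := by
  have e : (fun z : ℝ => (1 - z • A).det) = fun z => (1 - z₀ • A).det *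
      (1 + (-(B * A)).trace * (z - z₀) +
        (Matrix.det (1 + (Polynomial.X : Polynomial ℝ) •
          (-(B * A)).map Polynomial.C)).divX.divX.eval (z - z₀) * (z - z₀) ^ 2) := by
    funext z
    rw [← Matrix.det_one_add_smul, ← Matrix.det_mul]
    congr 1
    rw [mul_add, mul_one, mul_smul_comm, mul_neg, ← mul_assoc, h, one_mul, sub_smul, smul_neg,
      smul_neg]
    abel
  rw [e]
  generalize (Matrix.det (1 + (Polynomial.X : Polynomial ℝ) •
          (-(B * A)).map Polynomial.C)).divX.divX = P
  have h1 : HasDerivAt (fun z : ℝ => z - z₀) 1 z₀ := (hasDerivAt_id z₀).sub_const z₀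
  have h2 : HasDerivAt (fun z : ℝ => P.eval (z - z₀)) _ z₀ :=
    HasDerivAt.comp (h := fun z => z - z₀) (h₂ := fun x => P.eval x) z₀ (P.hasDerivAt (z₀ - z₀)) h1
  have h3 := (((h1.const_mul (-(B * A)).trace).const_add 1).add (h2.mul (h1.pow 2))).const_mul
    (1 - z₀ • A).det
  refine h3.congr_deriv ?_
  rw [Matrix.trace_neg, Matrix.trace_mul_comm]
  simp
  ring

lemma series_deriv (a : ℕ → ℝ) (ha : ∀ N, |a N| ≤ (1/2)^N) (z : ℝ) (hz : |z| < 3/2) :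
    HasDerivAt (fun z => ∑' N, a N * z ^ N) (∑' N : ℕ, ((N:ℝ) + 1) * a (N+1) * z ^ N) z := by
  have hu : Summable (fun N : ℕ => (N:ℝ) * (3/4)^N) := by
    simpa using summable_pow_mul_geometric_of_norm_lt_one (R := ℝ) 1 (r := 3/4) (by norm_num)
  have hb : ∀ (N : ℕ) (y : ℝ), y ∈ Metric.ball (0:ℝ) (3/2) →
      ‖a N * (N * y ^ (N-1))‖ ≤ (N:ℝ) * (3/4)^N := by
    intro N y hy
    rw [mem_ball_zero_iff, Real.norm_eq_abs] at hy
    rw [Real.norm_eq_abs, abs_mul, abs_mul, abs_pow, Nat.abs_cast]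
    have h1 : |y| ^ (N-1) ≤ (3/2)^N :=
      (pow_le_pow_left₀ (abs_nonneg y) hy.le _).trans
        (pow_le_pow_right₀ (by norm_num) (Nat.sub_le _ _))
    calc |a N| * (N * |y|^(N-1)) ≤ (1/2)^N * (N * (3/2)^N) := by
          gcongr
          exact ha N
      _ = N * ((1/2)*(3/2))^N := by rw [mul_pow]; ring
      _ = _ := by norm_num
  have hzb : z ∈ Metric.ball (0:ℝ) (3/2) := by simpa using hz
  have h := hasDerivAt_tsum_of_isPreconnected (g := fun N z => a N * z ^ N)
    (g' := fun N z => a N * (N * z ^ (N-1))) hu Metric.isOpen_ball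
    (convex_ball (0:ℝ) (3/2)).isPreconnected (y₀ := 0)
    (fun N y _ => (hasDerivAt_pow N y).const_mul (a N)) hb (by simp)
    (summable_of_ne_finset_zero (s := {0}) (by intro b hb; simp at hb; simp [hb])) hzb
  refine h.congr_deriv ?_
  have hs : Summable (fun N : ℕ => a N * (N * z ^ (N-1))) :=
    Summable.of_norm_bounded hu (fun N => hb N z hzb)
  rw [hs.tsum_eq_zero_add]
  simp
  refine tsum_congr fun N => ?_
  ring

lemma analytic_part {n : ℕ} (A : Matrix (Fin n) (Fin n) ℝ) (β ε K : ℝ) (hε : 0 ≤ ε)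
    (h : ∀ i j, |A i j| ≤ ε) (hK : |β| * n + 1 ≤ K) (hKq : K * (n * ε) ≤ 1/2) :
    ∑' N, Ecoef (fun k => β * (A ^ k).trace) N =
      Real.exp (-β * A.trace) / (1 - A).det ^ β := by
  set s : ℕ → ℝ := fun k => β * (A ^ k).trace with hs
  have hK1 : 1 ≤ K := by
    have : 0 ≤ |β| * n := by positivity
    linarith
  have hq0 : 0 ≤ n * ε := by positivity
  have hq2 : n * ε ≤ 1/2 := by nlinarith
  have hsb : ∀ k, |s k| ≤ K * (n * ε) ^ k := by
    intro k
    rw [hs]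
    simp only [abs_mul]
    calc |β| * |(A^k).trace| ≤ |β| * (n * (n*ε)^k) := by
          gcongr
          exact trace_bound A ε hε h k
      _ = (|β| * n) * (n*ε)^k := by ring
      _ ≤ K * (n*ε)^k := by
          gcongr
          linarith
  have hE := Ecoef_bound s K (n*ε) hK1 hq0 hKq hsb
  set g : ℝ → ℝ := fun z => ∑' N, Ecoef s N * z ^ N with hg
  -- the resolvent
  have hB : ∀ z ∈ Set.Icc (0:ℝ) 1, ∃ B, (1 - z • A) * B = 1 ∧
      HasSum (fun k => (z • A) ^ k) B := by
    intro z hz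
    apply geom_matrix
    intro i
    refine (Finset.sum_le_card_nsmul _ _ ε ?_).trans_lt ?_
    · intro j _
      simp only [Matrix.smul_apply, smul_eq_mul, abs_mul, abs_of_nonneg hz.1]
      have := h i j
      have := abs_nonneg (A i j)
      nlinarith [hz.2]
    · simp
      linarith
  have hderiv : ∀ z ∈ Set.Icc (0:ℝ) 1, HasDerivAt
      (fun z => g z * Real.exp (β * A.trace * z) * (1 - z • A).det ^ β) 0 z := by
    intro z hz
    obtain ⟨B, hB1, hB2⟩ := hB z hz
    have hdet : (1 - z • A).det ≠ 0 := by
      intro h0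
      have := congrArg Matrix.det hB1
      rw [Matrix.det_mul, h0] at this
      simp at this
    have hz' : |z| ≤ 1 := abs_le.2 ⟨by linarith [hz.1], hz.2⟩
    have hg' : HasDerivAt g ((β * (A * B).trace - β * A.trace) * g z) z := by
      refine (series_deriv (Ecoef s) hE z (by linarith)).congr_deriv ?_
      have hS : HasSum (fun i : ℕ => (if i = 0 then 0 else s (i+1)) * z ^ i)
          (β * (A * B).trace - β * A.trace) := by
        have h1 : HasSum (fun i : ℕ => β * (A * (z • A) ^ i).trace) (β * (A * B).trace) :=
          ((hB2.mul_left A).map (Matrix.traceAddMonoidHom (Fin n) ℝ)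
            (Continuous.matrix_trace continuous_id)).mul_left β
        have h2 : HasSum (fun i : ℕ => if i = 0 then β * A.trace else 0) (β * A.trace) :=
          hasSum_ite_eq 0 _
        refine (h1.sub h2).congr_fun ?_
        intro i
        rcases i with _ | i
        · simp
        · simp [hs, smul_pow, pow_succ']
          ring
      rw [← hS.tsum_eq, hg]
      rw [tsum_mul_tsum_eq_tsum_sum_antidiagonal_of_summable_norm]
      · refine tsum_congr fun N => ?_
        rw [Ecoef_rec, Finset.sum_mul]
        refine Finset.sum_congr rfl ?_
        rintro ⟨i, j⟩ hij
        rw [Finset.HasAntidiagonal.mem_antidiagonal] at hij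
        simp only at hij ⊢
        rw [← hij, pow_add]
        ring
      · exact hS.summable.norm
      · refine Summable.of_nonneg_of_le (fun _ => norm_nonneg _) (fun N => ?_)
          (summable_geometric_two)
        rw [Real.norm_eq_abs, abs_mul, abs_pow]
        calc _ ≤ ((1:ℝ)/2)^N * 1 := by
              gcongr
              · exact hE N
              · exact pow_le_one₀ (abs_nonneg z) hz'
          _ = _ := mul_one _
    have he : HasDerivAt (fun z => Real.exp (β * A.trace * z))
        (Real.exp (β * A.trace * z) * (β * A.trace)) z := by
      simpa using ((hasDerivAt_id z).const_mul (β * A.trace)).exp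
    have hd := (det_deriv A B z hB1).rpow_const (p := β) (Or.inl hdet)
    refine ((hg'.mul he).mul hd).congr_deriv ?_
    rw [Real.rpow_sub_one hdet]
    simp only [Pi.mul_apply]
    field_simp
    ring
  have hconst := constant_of_has_deriv_right_zero
    (fun z hz => (hderiv z hz).continuousAt.continuousWithinAt)
    (fun z hz => (hderiv z ⟨hz.1, hz.2.le⟩).hasDerivWithinAt) 1 (by simp)
  have hg0 : g 0 = 1 := by
    rw [hg]
    simp only
    rw [tsum_eq_single 0 (by intro b hb; simp [hb])]
    simp [Ecoef_zero]
  simp only [hg0, one_smul, zero_smul, mul_zero, mul_one, Real.exp_zero, sub_zero, Matrix.det_one,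
    Real.one_rpow] at hconst
  have hg1 : ∑' N, Ecoef s N = g 1 := by simp [hg]
  have hne : (1 - A).det ^ β ≠ 0 := by
    intro h0
    rw [h0] at hconst
    simp at hconst
  rw [hg1, eq_div_iff hne, neg_mul, Real.exp_neg]
  apply eq_inv_of_mul_eq_one_left
  linarith

/-- Grouping exponent vectors by total degree. -/
def layerEquiv (n : ℕ) :
    (Σ N : ℕ, {r // r ∈ Finset.piAntidiag (Finset.univ : Finset (Fin n)) N}) ≃ (Fin n → ℕ) where
  toFun x := x.2.1
  invFun r := ⟨∑ i, r i, ⟨r, by simp⟩⟩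
  left_inv := by
    rintro ⟨N, ⟨r, h⟩⟩
    obtain rfl : ∑ i, r i = N := by simpa using h
    rfl
  right_inv r := rfl

lemma dpermB_abs {α : Type*} [Fintype α] [DecidableEq α] (β : ℝ) (M : Matrix α α ℝ) :
    |dpermB β M| ≤ dpermB |β| (fun i j => |M i j|) := by
  unfold dpermB
  refine (Finset.abs_sum_le_sum_abs _ _).trans (le_of_eq ?_)
  refine Finset.sum_congr rfl fun π _ => ?_
  rw [abs_mul, abs_pow, Finset.abs_prod]

/-- The Derangement MacMahon Master Theorem:
`Σ_r (1/r!) dperm_β A(n^r,n^r) = e^{-β Tr A} / det(I-A)^β` for small `A`. -/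
theorem derangement_MMT (n : ℕ) (β : ℝ) :
    ∃ ε > (0 : ℝ), ∀ A : Matrix (Fin n) (Fin n) ℝ, (∀ i j, |A i j| < ε) →
      ∑' r : Fin n → ℕ, ((∏ i, (r i).factorial : ℕ) : ℝ)⁻¹ * dpermB β (repA A r)
        = Real.exp (-β * Matrix.trace A) / Matrix.det (1 - A) ^ β := by
  set K : ℝ := |β| * n + 1 with hK
  have hK0 : 0 < K := by positivity
  refine ⟨1 / (2 * K * (n + 1)), by positivity, fun A hA => ?_⟩
  set ε : ℝ := 1 / (2 * K * (n + 1)) with hε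
  have hε0 : 0 ≤ ε := by positivity
  have hKq : K * (n * ε) ≤ 1/2 := by
    rw [hε]
    have : K * (n * (1 / (2 * K * (n + 1)))) = (1/2) * (n / (n+1) : ℝ) := by field_simp
    rw [this]
    have : (n / (n+1) : ℝ) ≤ 1 := by
      rw [div_le_one (by positivity)]
      linarith
    linarith
  have hA' : ∀ i j, |A i j| ≤ ε := fun i j => (hA i j).le
  let A' : Matrix (Fin n) (Fin n) ℝ := fun i j => |A i j|
  have hA'' : ∀ i j, |A' i j| ≤ ε := fun i j => by simpa [A'] using hA' i j
  have hdpos : ∀ r : Fin n → ℕ, 0 ≤ dpermB |β| (repA A' r) := fun r =>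
    (abs_nonneg _).trans (dpermB_abs β (repA A r))
  -- summability
  have hsum' : Summable (fun r : Fin n → ℕ =>
      ((∏ i, (r i).factorial : ℕ) : ℝ)⁻¹ * dpermB |β| (repA A' r)) := by
    rw [← (layerEquiv n).summable_iff, summable_sigma_of_nonneg]
    · refine ⟨fun N => (hasSum_fintype _).summable, ?_⟩
      have e : ∀ N, ∑' y : {r // r ∈ Finset.piAntidiag (Finset.univ : Finset (Fin n)) N},
          ((fun r : Fin n → ℕ => ((∏ i, (r i).factorial : ℕ) : ℝ)⁻¹ * dpermB |β| (repA A' r)) ∘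
            (layerEquiv n)) ⟨N, y⟩ = Ecoef (fun k => |β| * (A' ^ k).trace) N := by
        intro N
        rw [tsum_fintype, ← layer_sum]
        exact Finset.sum_coe_sort (Finset.piAntidiag (Finset.univ : Finset (Fin n)) N)
          (fun r => ((∏ i, (r i).factorial : ℕ) : ℝ)⁻¹ * dpermB |β| (repA A' r))
      simp only [e]
      refine Summable.of_norm_bounded summable_geometric_two fun N => ?_
      refine Ecoef_bound _ K (n * ε) ?_ (by positivity) hKq ?_ N
      · have : 0 ≤ |β| * n := by positivity
        linarith
      · intro k
        simp only [abs_mul, abs_abs]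
        calc |β| * |(A'^k).trace| ≤ |β| * (n * (n*ε)^k) := by
              gcongr
              exact trace_bound A' ε hε0 hA'' k
          _ = (|β| * n) * (n*ε)^k := by ring
          _ ≤ K * (n*ε)^k := by
              gcongr
              linarith
    · intro x
      exact mul_nonneg (by positivity) (hdpos _)
  have hsum : Summable (fun r : Fin n → ℕ =>
      ((∏ i, (r i).factorial : ℕ) : ℝ)⁻¹ * dpermB β (repA A r)) := by
    refine Summable.of_norm_bounded hsum' fun r => ?_
    rw [Real.norm_eq_abs, abs_mul, abs_of_nonneg (a := (((∏ i, (r i).factorial : ℕ) : ℝ)⁻¹))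
      (by positivity)]
    gcongr
    exact dpermB_abs β (repA A r)
  rw [← (layerEquiv n).tsum_eq]
  have hsum2 := (layerEquiv n).summable_iff.2 hsum
  refine (Summable.tsum_sigma hsum2).trans ?_
  rw [← analytic_part A β ε K hε0 hA' le_rfl hKq]
  refine tsum_congr fun N => ?_
  rw [tsum_fintype, ← layer_sum]
  exact Finset.sum_coe_sort (Finset.piAntidiag (Finset.univ : Finset (Fin n)) N)
    (fun r => ((∏ i, (r i).factorial : ℕ) : ℝ)⁻¹ * dpermB β (repA A r))
end
end

section
/- (Submatrix Derangement MMT) With block matrix [[B,U],[V,A]] (B n'×n', A n×n): Σ_r (1/r!) dperm_β [[B, U(n^r)],[V(n^r), A(n^r,n^r)]] = e^{-β Tr A} · perm_β(B̂) / det(I-A)^β, where B̂ = B − diag B + U(I-A)^{-1}V and (diag B)_{i'j'} = B_{i'i'} δ_{i'j'}. -/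
open scoped Classical

noncomputable section

/-- The β-extended permanent of a matrix. -/
def permB {α : Type*} [Fintype α] [DecidableEq α] {R : Type*} [CommRing R]
    (β : R) (M : Matrix α α R) : R :=
  ∑ π : Equiv.Perm α, β ^ cycleCount π * ∏ i, M i (π i)

/-- `U(n^r)`: columns of `U` repeated according to `r`. -/
def repU {n' n : ℕ} {R : Type*} (U : Matrix (Fin n') (Fin n) R) (r : Fin n → ℕ) :
    Matrix (Fin n') ((i : Fin n) × Fin (r i)) R :=
  fun i' k => U i' k.1

/-- `V(n^r)`: rows of `V` repeated according to `r`. -/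
def repV {n' n : ℕ} {R : Type*} (V : Matrix (Fin n) (Fin n') R) (r : Fin n → ℕ) :
    Matrix ((i : Fin n) × Fin (r i)) (Fin n') R :=
  fun k j' => V k.1 j'

section helpers

theorem cycleCount_congr {α γ : Type*} [Fintype α] [DecidableEq α] [Fintype γ] [DecidableEq γ]
    (e : α ≃ γ) (σ : Equiv.Perm α) : cycleCount (e.permCongr σ) = cycleCount σ := by
  unfold cycleCount
  congr 1
  · refine Finset.card_bij' (fun x _ => e.symm x) (fun x _ => e x) ?_ ?_ ?_ ?_
    · intro x hx
      simp only [Finset.mem_filter, Finset.mem_univ, true_and] at hx ⊢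
      rw [Equiv.permCongr_apply] at hx
      exact e.injective (by rw [hx]; simp)
    · intro x hx
      simp only [Finset.mem_filter, Finset.mem_univ, true_and] at hx ⊢
      rw [Equiv.permCongr_apply]
      simp [hx]
    · simp
    · simp
  · have h := Equiv.Perm.cycleType_extendDomain (p := fun _ : γ => True)
      (e.trans (Equiv.subtypeUnivEquiv (fun _ => trivial)).symm) (g := σ)
    rw [← h]
    congr 2

theorem cycleCount_optionCongr {α : Type*} [Fintype α] [DecidableEq α] (σ : Equiv.Perm α) :
    cycleCount (Equiv.optionCongr σ) = cycleCount σ + 1 := by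
  unfold cycleCount
  have h := Equiv.Perm.cycleType_extendDomain (p := fun x : Option α => x.isSome)
      (Equiv.optionIsSomeEquiv α).symm (g := σ)
  have h2 : Equiv.optionCongr σ = σ.extendDomain (Equiv.optionIsSomeEquiv α).symm := by
    ext1 x
    rcases x with _ | x
    · rw [Equiv.Perm.extendDomain_apply_not_subtype]
      · simp
      · simp
    · rw [Equiv.Perm.extendDomain_apply_subtype _ _ (by simp)]
      simp [Equiv.optionIsSomeEquiv]
  have h3 : (Finset.univ.filter fun x => (Equiv.optionCongr σ) x = x)
      = Finset.insertNone (Finset.univ.filter fun x => σ x = x) := by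
    ext x
    rcases x with _ | x <;> simp
  rw [h3, Finset.card_insertNone, h2, h]
  omega

theorem cycleCount_swap_mul {γ : Type*} [Fintype γ] [DecidableEq γ] (τ : Equiv.Perm γ)
    (x y : γ) (hx : τ x = x) (hxy : x ≠ y) :
    cycleCount (Equiv.swap x y * τ) + 1 = cycleCount τ := by
  unfold cycleCount
  by_cases hy : τ y = y
  · have hd : (Equiv.swap x y).Disjoint τ := by
      intro z
      by_cases h1 : z = x
      · right; rw [h1, hx]
      by_cases h2 : z = y
      · right; rw [h2, hy]
      left; exact Equiv.swap_apply_of_ne_of_ne h1 h2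
    have h1 : (Finset.univ.filter fun z => τ z = z)
        = insert x (insert y (Finset.univ.filter fun z => (Equiv.swap x y * τ) z = z)) := by
      ext z
      simp only [Finset.mem_filter, Finset.mem_univ, true_and, Finset.mem_insert]
      rw [Equiv.Perm.mul_apply]
      by_cases h1 : z = x
      · simp [h1, hx]
      by_cases h2 : z = y
      · simp [h2, hy]
      simp only [h1, h2, false_or]
      have a1 : τ z ≠ x := fun h => h1 (τ.injective (h.trans hx.symm))
      have a2 : τ z ≠ y := fun h => h2 (τ.injective (h.trans hy.symm))
      rw [Equiv.swap_apply_of_ne_of_ne a1 a2]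
    rw [hd.cycleType_mul, h1, Finset.card_insert_of_notMem, Finset.card_insert_of_notMem,
      (Equiv.Perm.isSwap_iff_cycleType.1 ⟨x, y, hxy, rfl⟩)]
    · simp; omega
    · rw [Finset.mem_filter]; simp [hy, hxy]
    · rw [Finset.mem_insert, Finset.mem_filter]; simp [hx, hxy, hxy.symm]
  · have h1 : (Finset.univ.filter fun z => τ z = z)
        = insert x (Finset.univ.filter fun z => (Equiv.swap x y * τ) z = z) := by
      ext z
      simp only [Finset.mem_filter, Finset.mem_univ, true_and, Finset.mem_insert]
      rw [Equiv.Perm.mul_apply]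
      by_cases h1 : z = x
      · simp [h1, hx]
      have a1 : τ z ≠ x := fun h => h1 (τ.injective (h.trans hx.symm))
      simp only [h1, false_or]
      by_cases h2 : τ z = y
      · rw [h2, Equiv.swap_apply_right]
        constructor
        · intro h; subst h; exact absurd h2 hy
        · intro h; exact absurd h.symm h1
      · rw [Equiv.swap_apply_of_ne_of_ne a1 h2]
    have hys : y ∈ τ.support := by simpa using hy
    set c := τ.cycleOf y with hc
    set τ' := τ * c⁻¹ with hτ'
    have hmem : c ∈ τ.cycleFactorsFinset := Equiv.Perm.cycleOf_mem_cycleFactorsFinset_iff.2 hys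
    have hdis : τ'.Disjoint c := Equiv.Perm.disjoint_mul_inv_of_mem_cycleFactorsFinset hmem
    have hτ : τ = c * τ' := by
      rw [← hdis.commute.eq]; simp [hτ']
    have hcyc : c.IsCycle := (Equiv.Perm.mem_cycleFactorsFinset_iff.1 hmem).1
    obtain ⟨l, hl⟩ : ∃ l, Equiv.Perm.toList τ y = y :: l := by
      have h0 := Equiv.Perm.length_toList_pos_of_mem_support τ y hys
      have h1 := Equiv.Perm.toList_getElem_zero τ y hys
      rcases hL : Equiv.Perm.toList τ y with _ | ⟨z, l⟩
      · simp [hL] at h0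
      · simp only [hL, List.getElem_cons_zero] at h1
        exact ⟨l, by rw [h1]⟩
    have hf : c = List.formPerm (y :: l) := by rw [← hl, Equiv.Perm.formPerm_toList]
    have hnd : (y :: l).Nodup := hl ▸ Equiv.Perm.nodup_toList τ y
    have hxl : x ∉ y :: l := by
      rw [← hl, Equiv.Perm.mem_toList_iff]
      rintro ⟨h, -⟩
      exact hxy ((h.symm.eq_of_left hx))
    have hf2 : Equiv.swap x y * c = List.formPerm (x :: y :: l) := by
      rw [List.formPerm_cons_cons, hf]
    have hcyc2 : (Equiv.swap x y * c).IsCycle := by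
      rw [hf2]
      exact List.isCycle_formPerm (List.nodup_cons.2 ⟨hxl, hnd⟩) (by simp)
    have hcx : c x = x := by
      rw [hf]; exact List.formPerm_apply_of_notMem hxl
    have hτx : τ' x = x := by
      simp only [hτ', Equiv.Perm.mul_apply]
      rw [Equiv.Perm.inv_eq_iff_eq.2 hcx.symm, hx]
    have hτy : τ' y = y := by
      rcases hdis y with h | h
      · exact h
      · rw [hc, Equiv.Perm.cycleOf_apply_self] at h
        exact absurd h hy
    have hdis2 : (Equiv.swap x y * c).Disjoint τ' := by
      intro z
      by_cases h1 : z = x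
      · right; rw [h1, hτx]
      by_cases h2 : z = y
      · right; rw [h2, hτy]
      rcases hdis z with h | h
      · right; exact h
      · left; rw [Equiv.Perm.mul_apply, h, Equiv.swap_apply_of_ne_of_ne h1 h2]
    have e1 : Equiv.swap x y * τ = (Equiv.swap x y * c) * τ' := by
      rw [mul_assoc, ← hτ]
    have e2 : τ.cycleType = c.cycleType + τ'.cycleType := by
      conv_lhs => rw [hτ]
      exact hdis.symm.cycleType_mul
    rw [h1, Finset.card_insert_of_notMem (by rw [Finset.mem_filter]; simp [hx, hxy.symm]), e1, hdis2.cycleType_mul, e2,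
      hcyc.cycleType, hcyc2.cycleType]
    simp
    omega

theorem permB_submatrix {α γ R : Type*} [Fintype α] [DecidableEq α] [Fintype γ] [DecidableEq γ]
    [CommRing R] (β : R) (e : α ≃ γ) (M : Matrix γ γ R) :
    permB β (M.submatrix e e) = permB β M := by
  unfold permB
  refine Fintype.sum_equiv e.permCongr _ _ (fun σ => ?_)
  rw [cycleCount_congr]
  congr 1
  refine Fintype.prod_equiv e _ _ (fun i => ?_)
  simp [Matrix.submatrix_apply]

theorem permB_of_equiv {α γ R : Type*} [Fintype α] [DecidableEq α] [Fintype γ] [DecidableEq γ]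
    [CommRing R] (β : R) (e : α ≃ γ) (N : Matrix α α R) (M : Matrix γ γ R)
    (h : ∀ i j, N i j = M (e i) (e j)) :
    permB β N = permB β M := by
  rw [← permB_submatrix β e M]
  congr 1
  ext i j
  exact h i j

theorem permB_option {α R : Type*} [Fintype α] [DecidableEq α] [CommRing R] (β : R)
    (M : Matrix (Option α) (Option α) R) :
    permB β M = β * M none none * permB β (M.submatrix some some) +
      ∑ j, permB β ((M.submatrix some some).updateRow j
        (fun k => M (some j) none * M none (some k))) := by
  unfold permB
  rw [← Equiv.sum_comp (Equiv.Perm.decomposeOption (α := α)).symm, Fintype.sum_prod_type,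
    Fintype.sum_option]
  congr 1
  · rw [Finset.mul_sum]
    refine Finset.sum_congr rfl (fun σ _ => ?_)
    simp only [Equiv.Perm.decomposeOption_symm_apply,
      Fintype.prod_option]
    simp [cycleCount_optionCongr, Equiv.Perm.mul_def]
    ring
  · rw [Finset.sum_comm, Finset.sum_comm (s := Finset.univ (α := α))]
    refine Finset.sum_congr rfl (fun σ _ => ?_)
    refine Fintype.sum_equiv σ.symm _ _ (fun a => ?_)
    simp only [Equiv.Perm.decomposeOption_symm_apply]
    have h1 : cycleCount (Equiv.swap none (some a) * Equiv.optionCongr σ) = cycleCount σ := by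
      have := cycleCount_swap_mul (Equiv.optionCongr σ) none (some a) (by simp) (by simp)
      rw [cycleCount_optionCongr] at this
      omega
    rw [h1]
    congr 1
    rw [Fintype.prod_option, ← Finset.mul_prod_erase Finset.univ _ (Finset.mem_univ (σ.symm a)),
      ← Finset.mul_prod_erase Finset.univ (fun i => (M.submatrix some some).updateRow _ _ i (σ i))
        (Finset.mem_univ (σ.symm a)), ← mul_assoc]
    congr 1
    · simp [mul_comm]
    · refine Finset.prod_congr rfl (fun i hi => ?_)
      have hi' : i ≠ σ.symm a := Finset.ne_of_mem_erase hi
      rw [Matrix.updateRow_ne hi']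
      have : σ i ≠ a := fun h => hi' (by rw [← h]; simp)
      simp only [Equiv.Perm.mul_apply, Equiv.optionCongr_apply, Option.map_some,
        Matrix.submatrix_apply]
      rw [Equiv.swap_apply_of_ne_of_ne (by simp) (by simpa using this)]

theorem permB_updateRow_smul {α R : Type*} [Fintype α] [DecidableEq α] [CommRing R] (β : R)
    (M : Matrix α α R) (i : α) (s : R) (w : α → R) :
    permB β (M.updateRow i (s • w)) = s * permB β (M.updateRow i w) := by
  unfold permB
  rw [Finset.mul_sum]
  refine Finset.sum_congr rfl (fun σ _ => ?_)
  rw [← Finset.mul_prod_erase Finset.univ _ (Finset.mem_univ i),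
      ← Finset.mul_prod_erase Finset.univ (fun j => M.updateRow i w j (σ j))
        (Finset.mem_univ i)]
  have : ∀ j ∈ Finset.univ.erase i, M.updateRow i (s • w) j (σ j) = M.updateRow i w j (σ j) := by
    intro j hj
    have := Finset.ne_of_mem_erase hj
    rw [Matrix.updateRow_ne this, Matrix.updateRow_ne this]
  rw [Finset.prod_congr rfl this]
  simp
  ring

open Polynomial in
theorem derivative_permB {α : Type*} [Fintype α] [DecidableEq α] (β : ℝ)
    (M : Matrix α α ℝ[X]) :
    derivative (permB (C β) M) =
      ∑ i, permB (C β) (M.updateRow i (fun k => derivative (M i k))) := by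
  unfold permB
  rw [Finset.sum_comm, derivative_sum]
  refine Finset.sum_congr rfl (fun σ _ => ?_)
  rw [← C_pow, derivative_C_mul, derivative_prod_finset, Finset.mul_sum]
  refine Finset.sum_congr rfl (fun i _ => ?_)
  congr 1
  rw [← Finset.mul_prod_erase Finset.univ (fun j => Matrix.updateRow M i _ j (σ j))
        (Finset.mem_univ i), mul_comm]
  congr 1
  · simp
  · refine Finset.prod_congr rfl (fun j hj => ?_)
    rw [Matrix.updateRow_ne (Finset.ne_of_mem_erase hj)]

theorem permB_map {α R S : Type*} [Fintype α] [DecidableEq α] [CommRing R] [CommRing S]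
    (f : R →+* S) (β : R) (M : Matrix α α R) :
    f (permB β M) = permB (f β) (M.map f) := by
  simp [permB, map_sum, map_mul, map_prod, map_pow, Matrix.map_apply]

def optSumFin (α : Type*) (m : ℕ) : Option (α ⊕ Fin m) ≃ α ⊕ Fin (m + 1) where
  toFun := fun x => match x with
    | none => Sum.inr 0
    | some (Sum.inl i) => Sum.inl i
    | some (Sum.inr k) => Sum.inr k.succ
  invFun := fun x => match x with
    | Sum.inl i => some (Sum.inl i)
    | Sum.inr k => Fin.cases none (fun k => some (Sum.inr k)) k
  left_inv := by
    rintro (_ | i | k) <;> simp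
  right_inv := by
    rintro (i | k)
    · simp
    · refine Fin.cases ?_ (fun k => ?_) k <;> simp

def optSumFin' (α : Type*) (m : ℕ) : Option (α ⊕ Fin m) ≃ Option α ⊕ Fin m where
  toFun := fun x => match x with
    | none => Sum.inl none
    | some (Sum.inl i) => Sum.inl (some i)
    | some (Sum.inr k) => Sum.inr k
  invFun := fun x => match x with
    | Sum.inl none => none
    | Sum.inl (some i) => some (Sum.inl i)
    | Sum.inr k => some (Sum.inr k)
  left_inv := by
    rintro (_ | i | k) <;> simp
  right_inv := by
    rintro ((_ | i) | k) <;> simp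

/-- The block matrix with one index repeated `m` times. -/
def blk {α : Type*} (M : Matrix α α ℝ) (u v : α → ℝ) (a c : ℝ) (m : ℕ) :
    Matrix (α ⊕ Fin m) (α ⊕ Fin m) ℝ :=
  Matrix.fromBlocks M (fun i _ => u i) (fun _ j => v j) (fun k l => a + if k = l then c else 0)

@[simp] theorem blk_ll {α : Type*} (M : Matrix α α ℝ) (u v : α → ℝ) (a c : ℝ) (m : ℕ) (i j : α) :
    blk M u v a c m (Sum.inl i) (Sum.inl j) = M i j := rfl
@[simp] theorem blk_lr {α : Type*} (M : Matrix α α ℝ) (u v : α → ℝ) (a c : ℝ) (m : ℕ) (i : α)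
    (k : Fin m) : blk M u v a c m (Sum.inl i) (Sum.inr k) = u i := rfl
@[simp] theorem blk_rl {α : Type*} (M : Matrix α α ℝ) (u v : α → ℝ) (a c : ℝ) (m : ℕ) (j : α)
    (k : Fin m) : blk M u v a c m (Sum.inr k) (Sum.inl j) = v j := rfl
@[simp] theorem blk_rr {α : Type*} (M : Matrix α α ℝ) (u v : α → ℝ) (a c : ℝ) (m : ℕ)
    (k l : Fin m) : blk M u v a c m (Sum.inr k) (Sum.inr l) = a + if k = l then c else 0 := rfl

open Polynomial in
def Lf (β a : ℝ) : ℕ → (ℝ[X] →ₗ[ℝ] ℝ)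
  | 0 => Polynomial.leval 0
  | m + 1 => ((β + m) * a) • Lf β a m +
      (Lf β a m).comp ((LinearMap.mulLeft ℝ (1 + C a * X)).comp derivative)

open Polynomial in
/-- The polynomial matrix `M + X u vᵀ`. -/
def pmat {α : Type*} (M : Matrix α α ℝ) (u v : α → ℝ) : Matrix α α ℝ[X] :=
  fun i j => C (M i j) + X * C (u i * v j)

open Polynomial in
theorem permB_blk_zero {α : Type*} [Fintype α] [DecidableEq α] (β a : ℝ) (m : ℕ) :
    ∀ (M : Matrix α α ℝ) (u v : α → ℝ),
      permB β (blk M u v a 0 m) = Lf β a m (permB (C β) (pmat M u v)) := by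
  induction m with
  | zero =>
    intro M u v
    have h1 : permB β (blk M u v a 0 0) = permB β M := by
      symm
      refine permB_of_equiv β (Equiv.sumEmpty α (Fin 0)).symm _ _ (fun i j => ?_)
      simp
    have h2 := permB_map (Polynomial.evalRingHom (0 : ℝ)) (C β) (pmat M u v)
    simp only [Lf, leval_apply]
    simp only [coe_evalRingHom] at h2
    rw [h1, h2]
    simp only [eval_C]
    congr 1
    ext i j
    simp [pmat]
  | succ m ih =>
    intro M u v
    rw [← permB_submatrix β (optSumFin α m), permB_option]
    have hsub : ((blk M u v a 0 (m + 1)).submatrix (optSumFin α m) (optSumFin α m)).submatrix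
        some some = blk M u v a 0 m := by
      ext (i | k) (j | l) <;> simp [optSumFin]
    rw [hsub, Fintype.sum_sum_type]
    have hr : ∀ k : Fin m, permB β ((blk M u v a 0 m).updateRow (Sum.inr k) (fun l =>
        (blk M u v a 0 (m + 1)).submatrix (optSumFin α m) (optSumFin α m) (some (Sum.inr k)) none *
        (blk M u v a 0 (m + 1)).submatrix (optSumFin α m) (optSumFin α m) none (some l)))
        = a * permB β (blk M u v a 0 m) := by
      intro k
      have e : (fun l =>
        (blk M u v a 0 (m + 1)).submatrix (optSumFin α m) (optSumFin α m) (some (Sum.inr k)) none *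
        (blk M u v a 0 (m + 1)).submatrix (optSumFin α m) (optSumFin α m) none (some l))
          = a • (blk M u v a 0 m (Sum.inr k)) := by
        ext (j | l) <;> simp [optSumFin]
      rw [e, permB_updateRow_smul, Matrix.updateRow_eq_self]
    have hl : ∀ i : α, permB β ((blk M u v a 0 m).updateRow (Sum.inl i) (fun l =>
        (blk M u v a 0 (m + 1)).submatrix (optSumFin α m) (optSumFin α m) (some (Sum.inl i)) none *
        (blk M u v a 0 (m + 1)).submatrix (optSumFin α m) (optSumFin α m) none (some l)))
        = Lf β a m ((1 + C a * X) * permB (C β) ((pmat M u v).updateRow i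
            (fun k => derivative (pmat M u v i k)))) := by
      intro i
      have e : (blk M u v a 0 m).updateRow (Sum.inl i) (fun l =>
        (blk M u v a 0 (m + 1)).submatrix (optSumFin α m) (optSumFin α m) (some (Sum.inl i)) none *
        (blk M u v a 0 (m + 1)).submatrix (optSumFin α m) (optSumFin α m) none (some l))
          = blk (M.updateRow i (fun j => u i * v j)) (Function.update u i (u i * a)) v a 0 m := by
        ext (i' | k) (j | l)
        · by_cases h : i' = i
          · subst h; simp [optSumFin]
          · simp [Matrix.updateRow_apply, h]
        · by_cases h : i' = i
          · subst h; simp [optSumFin]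
          · simp [Matrix.updateRow_apply, h]
        · simp [Matrix.updateRow_apply]
        · simp [Matrix.updateRow_apply]
      rw [e, ih, ← permB_updateRow_smul]
      congr 2
      ext1 i' j
      by_cases h : i' = i
      · subst h
        simp [pmat]
        ring
      · simp [pmat, Matrix.updateRow_apply, h]
    simp only [hr, hl]
    rw [← map_sum, ← Finset.mul_sum, ← derivative_permB, ih]
    simp [Lf, optSumFin]
    ring

theorem permB_option_diag {α : Type*} [Fintype α] [DecidableEq α] (β : ℝ)
    (M N : Matrix (Option α) (Option α) ℝ) (h : ∀ i j, (i ≠ none ∨ j ≠ none) → M i j = N i j) :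
    permB β M = permB β N + β * (M none none - N none none) * permB β (M.submatrix some some) := by
  rw [permB_option β M, permB_option β N]
  have h1 : M.submatrix some some = N.submatrix some some := by
    ext i j; exact h _ _ (by simp)
  have h2 : ∀ j, M (some j) none = N (some j) none := fun j => h _ _ (by simp)
  have h3 : ∀ j, M none (some j) = N none (some j) := fun j => h _ _ (by simp)
  rw [h1]
  simp only [h2, h3]
  ring

def oM {α : Type*} (M : Matrix α α ℝ) (u v : α → ℝ) (a : ℝ) : Matrix (Option α) (Option α) ℝ :=
  fun i j => match i, j with
  | none, none => a
  | none, some j => v j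
  | some i, none => u i
  | some i, some j => M i j

theorem permB_blk_succ {α : Type*} [Fintype α] [DecidableEq α] (β a c : ℝ) (m : ℕ)
    (M : Matrix α α ℝ) (u v : α → ℝ) :
    permB β (blk M u v a c (m + 1)) =
      permB β (blk (oM M u v a) (fun i => i.elim a u) (fun i => i.elim a v) a c m)
        + β * c * permB β (blk M u v a c m) := by
  rw [← permB_submatrix β (optSumFin α m) (blk M u v a c (m + 1)),
    ← permB_submatrix β (optSumFin' α m) (blk (oM M u v a) _ _ a c m),
    permB_option_diag β _ ((blk (oM M u v a) (fun i => i.elim a u) (fun i => i.elim a v) a c m).submatrix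
      (optSumFin' α m) (optSumFin' α m))]
  · congr 1
    have hsub : ((blk M u v a c (m + 1)).submatrix (optSumFin α m) (optSumFin α m)).submatrix
        some some = blk M u v a c m := by
      ext (i | k) (j | l) <;> simp [optSumFin]
    rw [hsub]
    simp [optSumFin, optSumFin', oM]
  · rintro (_ | i | k) (_ | j | l) h <;> simp [optSumFin, optSumFin', oM] at h ⊢
    · simp [(Fin.succ_ne_zero l).symm]

theorem permB_blk_sum (β a c : ℝ) (m : ℕ) :
    ∀ {α : Type} [Fintype α] [DecidableEq α] (M : Matrix α α ℝ) (u v : α → ℝ),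
    permB β (blk M u v a c m) = ∑ ij ∈ Finset.HasAntidiagonal.antidiagonal m,
      (m.choose ij.1 : ℝ) * ((β * c) ^ ij.1 * permB β (blk M u v a 0 ij.2)) := by
  induction m with
  | zero =>
    intro α _ _ M u v
    simp
    congr 1
    ext (i | k) (j | l)
    · simp
    · exact l.elim0
    · exact k.elim0
    · exact k.elim0
  | succ m ih =>
    intro α _ _ M u v
    rw [Finset.sum_antidiagonal_choose_succ_mul
      (fun i j => (β * c) ^ i * permB β (blk M u v a 0 j)), permB_blk_succ, ih, ih, Finset.mul_sum]
    congr 1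
    · refine Finset.sum_congr rfl (fun ij _ => ?_)
      rw [permB_blk_succ β a 0]
      simp
    · refine Finset.sum_congr rfl (fun ij hij => ?_)
      have : m.choose ij.2 = m.choose ij.1 := by
        rw [← Finset.HasAntidiagonal.mem_antidiagonal.1 hij, Nat.choose_symm_add]
      rw [this]
      ring

theorem hs_of {ι : Type*} {f g : ι → ℝ} {a b : ℝ} (h : HasSum g b) (hf : ∀ i, f i = g i)
    (hb : a = b) : HasSum f a := by
  rw [hb, show f = g from funext hf]
  exact h

theorem mc_succ (x : ℝ) (j : ℕ) :
    ((j : ℝ) + 1) * Ring.multichoose x (j + 1) = (x + j) * Ring.multichoose x j := by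
  have h1 := Ring.factorial_nsmul_multichoose_eq_ascPochhammer x (j + 1)
  have h2 := Ring.factorial_nsmul_multichoose_eq_ascPochhammer x j
  rw [ascPochhammer_succ_right, Polynomial.smeval_mul, ← h2] at h1
  simp [Polynomial.smeval_add, Polynomial.smeval_X, Polynomial.smeval_natCast, Nat.factorial_succ] at h1
  have h3 : (j.factorial : ℝ) ≠ 0 := by positivity
  apply mul_left_cancel₀ h3
  linear_combination h1

open Polynomial in
theorem Lf_pow_zero (β a : ℝ) (m : ℕ) :
    Lf β a (m + 1) (X ^ 0) = (β + m) * a * Lf β a m (X ^ 0) := by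
  simp [Lf]

open Polynomial in
theorem Lf_pow_succ (β a : ℝ) (m k : ℕ) :
    Lf β a (m + 1) (X ^ (k + 1)) = ((β + m) * a + a * (k + 1)) * Lf β a m (X ^ (k + 1))
      + (k + 1) * Lf β a m (X ^ k) := by
  have : (1 + C a * X) * derivative (X ^ (k + 1) : ℝ[X]) =
      ((k : ℝ) + 1) • X ^ k + (a * ((k : ℝ) + 1)) • X ^ (k + 1) := by
    rw [derivative_X_pow, smul_eq_C_mul, smul_eq_C_mul]
    simp
    ring
  simp only [Lf, LinearMap.add_apply, LinearMap.smul_apply, LinearMap.comp_apply,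
    LinearMap.mulLeft_apply, this, map_add, map_smul, smul_eq_mul]
  ring

open Polynomial in
theorem Lf_pow (β a : ℝ) (m : ℕ) : ∀ k : ℕ, (m < k → Lf β a m (X ^ k) = 0) ∧
    (∀ j, m = k + j → Lf β a m (X ^ k) = m.factorial * (a ^ j * Ring.multichoose (β + k) j)) := by
  induction m with
  | zero =>
    intro k
    refine ⟨fun h => ?_, fun j hj => ?_⟩
    · have : k ≠ 0 := by omega
      simp [Lf, this]
    · have h1 : k = 0 := by omega
      have h2 : j = 0 := by omega
      subst h1; subst h2
      simp [Lf]
  | succ m ih =>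
    intro k
    rcases k with _ | k
    · refine ⟨fun h => by omega, fun j hj => ?_⟩
      have hj' : j = m + 1 := by omega
      subst hj'
      rw [Lf_pow_zero, (ih 0).2 m (by omega), Nat.factorial_succ]
      have := mc_succ (β + (0 : ℕ)) m
      push_cast at this ⊢
      linear_combination (-1) * (a ^ (m + 1) * m.factorial) * this
    · refine ⟨fun h => ?_, fun j hj => ?_⟩
      · rw [Lf_pow_succ, (ih (k + 1)).1 (by omega), (ih k).1 (by omega)]; simp
      · rw [Lf_pow_succ, (ih k).2 j (by omega)]
        rcases j with _ | j
        · rw [(ih (k + 1)).1 (by omega), Nat.factorial_succ]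
          have hm : m = k := by omega
          subst hm
          simp
        · rw [(ih (k + 1)).2 j (by omega), Nat.factorial_succ]
          have hm : (m : ℝ) = k + 1 + j := by
            have : m = k + 1 + j := by omega
            rw [this]; push_cast; ring
          have h1 := mc_succ (β + (k + 1 : ℕ)) j
          have h2 := Ring.multichoose_succ_succ (β + k) j
          push_cast at h1 h2 ⊢
          rw [show β + (k : ℝ) + 1 = β + (k + 1) by ring] at h2
          rw [hm]
          linear_combination (-1) * (a ^ (j + 1) * m.factorial) * h1 -
             (a ^ (j + 1) * m.factorial * (k + 1)) * h2

theorem hasSum_mc (x a : ℝ) (ha : |a| < 1) :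
    HasSum (fun j : ℕ => a ^ j * Ring.multichoose x j) (1 / (1 - a) ^ x) := by
  have h := (Real.one_div_one_sub_rpow_hasFPowerSeriesOnBall_zero x).hasSum (y := a)
    (by simpa [Metric.mem_eball, edist_dist, Real.dist_eq] using ha)
  simp only [zero_add] at h
  refine hs_of h (fun j => ?_) rfl
  simp [FormalMultilinearSeries.ofScalars_apply_eq, Ring.multichoose_eq, mul_comm]

open Polynomial in
theorem hasSum_Lf (β a : ℝ) (ha : |a| < 1) (p : ℝ[X]) :
    HasSum (fun m : ℕ => (m.factorial : ℝ)⁻¹ * Lf β a m p)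
      (p.eval (1 - a)⁻¹ / (1 - a) ^ β) := by
  have hpos : 0 < 1 - a := by have := (abs_lt.1 ha).2; linarith
  induction p using Polynomial.induction_on' with
  | add p q hp hq =>
    have := hp.add hq
    simp only [map_add, mul_add, eval_add, add_div]
    exact this
  | monomial k r =>
    have key : HasSum (fun m : ℕ => (m.factorial : ℝ)⁻¹ * Lf β a m (X ^ k))
        (1 / (1 - a) ^ (β + k)) := by
      have h := hasSum_mc (β + k) a ha
      rw [← Function.Injective.hasSum_iff (add_right_injective k)]
      · refine hs_of h (fun j => ?_) rfl
        simp only [Function.comp]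
        rw [(Lf_pow β a (k + j) k).2 j rfl]
        have : ((k + j).factorial : ℝ) ≠ 0 := by positivity
        field_simp
      · intro m hm
        have : m < k := by
          by_contra h
          exact hm ⟨m - k, by simp; omega⟩
        rw [(Lf_pow β a m k).1 this, mul_zero]
    have := key.mul_left r
    refine hs_of this (fun m => ?_) ?_
    · rw [← smul_X_eq_monomial, map_smul, smul_eq_mul]; ring
    · rw [Real.rpow_add hpos, Real.rpow_natCast]
      simp
      field_simp

theorem hasSum_blk_zero {α : Type} [Fintype α] [DecidableEq α] (β a : ℝ) (ha : |a| < 1)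
    (M : Matrix α α ℝ) (u v : α → ℝ) :
    HasSum (fun m : ℕ => (m.factorial : ℝ)⁻¹ * permB β (blk M u v a 0 m))
      (permB β (fun i j => M i j + (1 - a)⁻¹ * (u i * v j)) / (1 - a) ^ β) := by
  have h := hasSum_Lf β a ha (permB (Polynomial.C β) (pmat M u v))
  simp only [← permB_blk_zero] at h
  refine hs_of h (fun m => rfl) ?_
  congr 1
  have h2 := permB_map (Polynomial.evalRingHom (1 - a)⁻¹) (Polynomial.C β) (pmat M u v)
  simp only [Polynomial.coe_evalRingHom] at h2
  rw [h2, Polynomial.eval_C]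
  congr 1
  ext i j
  simp [pmat]

theorem hasSum_blk {α : Type} [Fintype α] [DecidableEq α] (β a c : ℝ) (ha : |a| < 1)
    (M : Matrix α α ℝ) (u v : α → ℝ) :
    HasSum (fun m : ℕ => (m.factorial : ℝ)⁻¹ * permB β (blk M u v a c m))
      (Real.exp (β * c) * (permB β (fun i j => M i j + (1 - a)⁻¹ * (u i * v j)) / (1 - a) ^ β)) := by
  have h1 := hasSum_blk_zero β a ha M u v
  have h2 : HasSum (fun m : ℕ => (β * c) ^ m / m.factorial) (Real.exp (β * c)) := by
    rw [Real.exp_eq_exp_ℝ]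
    exact NormedSpace.expSeries_div_hasSum_exp (β * c)
  have e := tsum_mul_tsum_eq_tsum_sum_antidiagonal_of_summable_norm h2.summable.norm h1.summable.norm
  have s := (summable_norm_sum_mul_antidiagonal_of_summable_norm h2.summable.norm
    h1.summable.norm).of_norm
  rw [h1.tsum_eq, h2.tsum_eq] at e
  rw [e]
  refine hs_of s.hasSum (fun m => ?_) rfl
  rw [permB_blk_sum, Finset.mul_sum]
  refine Finset.sum_congr rfl (fun ij hij => ?_)
  have hm := Finset.HasAntidiagonal.mem_antidiagonal.1 hij
  have : ((m.choose ij.1 : ℕ) : ℝ) * ij.1.factorial * ij.2.factorial = m.factorial := by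
    rw [← hm, Nat.choose_symm_add]; exact_mod_cast Nat.add_choose_mul_factorial_mul_factorial _ _
  have f0 : (m.factorial : ℝ) ≠ 0 := by positivity
  rw [← this] at f0 ⊢
  have f1 : (ij.1.factorial : ℝ) ≠ 0 := by positivity
  have f2 : (ij.2.factorial : ℝ) ≠ 0 := by positivity
  have f3 : (m.choose ij.1 : ℝ) ≠ 0 := by
    intro h; rw [h] at f0; simp at f0
  field_simp

theorem abs_permB_le {α : Type*} [Fintype α] [DecidableEq α] (β : ℝ) (M N : Matrix α α ℝ)
    (h : ∀ i j, |M i j| ≤ N i j) : |permB β M| ≤ permB |β| N := by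
  unfold permB
  refine (Finset.abs_sum_le_sum_abs _ _).trans (Finset.sum_le_sum fun σ _ => ?_)
  rw [abs_mul, abs_pow, Finset.abs_prod]
  refine mul_le_mul_of_nonneg_left ?_ (by positivity)
  exact Finset.prod_le_prod (fun _ _ => abs_nonneg _) (fun i _ => h _ _)

/-- The block matrix with the indices of `A` repeated, and with a diagonal shift. -/
def big {α : Type*} {n : ℕ} (B : Matrix α α ℝ) (U : Matrix α (Fin n) ℝ) (V : Matrix (Fin n) α ℝ)
    (A : Matrix (Fin n) (Fin n) ℝ) (c : Fin n → ℝ) (r : Fin n → ℕ) :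
    Matrix (α ⊕ (i : Fin n) × Fin (r i)) (α ⊕ (i : Fin n) × Fin (r i)) ℝ :=
  Matrix.fromBlocks B (fun i k => U i k.1) (fun k j => V k.1 j)
    (fun k l => A k.1 l.1 + if k = l then c k.1 else 0)

section bigsimp
variable {α : Type*} {n : ℕ} (B : Matrix α α ℝ) (U : Matrix α (Fin n) ℝ) (V : Matrix (Fin n) α ℝ)
    (A : Matrix (Fin n) (Fin n) ℝ) (c : Fin n → ℝ) (r : Fin n → ℕ)
@[simp] theorem big_ll (i j : α) : big B U V A c r (Sum.inl i) (Sum.inl j) = B i j := rfl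
@[simp] theorem big_lr (i : α) (k : (i : Fin n) × Fin (r i)) :
    big B U V A c r (Sum.inl i) (Sum.inr k) = U i k.1 := rfl
@[simp] theorem big_rl (i : α) (k : (i : Fin n) × Fin (r i)) :
    big B U V A c r (Sum.inr k) (Sum.inl i) = V k.1 i := rfl
@[simp] theorem big_rr (k l : (i : Fin n) × Fin (r i)) :
    big B U V A c r (Sum.inr k) (Sum.inr l) = A k.1 l.1 + if k = l then c k.1 else 0 := rfl
end bigsimp

def sigEquiv (α : Type*) {n : ℕ} (r : Fin (n + 1) → ℕ) :
    (α ⊕ (i : Fin n) × Fin (r i.succ)) ⊕ Fin (r 0) ≃ α ⊕ (i : Fin (n + 1)) × Fin (r i) :=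
  Equiv.ofBijective (fun x => match x with
    | Sum.inl (Sum.inl i) => Sum.inl i
    | Sum.inl (Sum.inr k) => Sum.inr ⟨k.1.succ, k.2⟩
    | Sum.inr k => Sum.inr ⟨0, k⟩) (by
    constructor
    · rintro ((i | ⟨i, k⟩) | k) ((j | ⟨j, l⟩) | l) h
      · simpa using h
      · simp at h
      · simp at h
      · simp at h
      · simp only [Sum.inr.injEq, Sigma.mk.injEq] at h
        obtain ⟨h1, h2⟩ := h
        have := Fin.succ_injective _ h1
        subst this
        simpa using h2
      · simp [Fin.succ_ne_zero] at h
      · simp at h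
      · simp [(Fin.succ_ne_zero _).symm] at h
      · simpa using h
    · rintro (i | ⟨i, k⟩)
      · exact ⟨Sum.inl (Sum.inl i), rfl⟩
      · revert k
        refine Fin.cases ?_ (fun i => ?_) i
        · intro k; exact ⟨Sum.inr k, rfl⟩
        · intro k; exact ⟨Sum.inl (Sum.inr ⟨i, k⟩), rfl⟩)

theorem sigEquiv_a (α : Type*) {n : ℕ} (r : Fin (n + 1) → ℕ) (i : α) :
    sigEquiv α r (Sum.inl (Sum.inl i)) = Sum.inl i := rfl
theorem sigEquiv_b (α : Type*) {n : ℕ} (r : Fin (n + 1) → ℕ) (i : Fin n) (k : Fin (r i.succ)) :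
    sigEquiv α r (Sum.inl (Sum.inr ⟨i, k⟩)) = Sum.inr ⟨i.succ, k⟩ := rfl
theorem sigEquiv_c (α : Type*) {n : ℕ} (r : Fin (n + 1) → ℕ) (k : Fin (r 0)) :
    sigEquiv α r (Sum.inr k) = Sum.inr ⟨0, k⟩ := rfl

theorem permB_big_succ {α : Type} [Fintype α] [DecidableEq α] {n : ℕ} (β : ℝ)
    (B : Matrix α α ℝ) (U : Matrix α (Fin (n + 1)) ℝ) (V : Matrix (Fin (n + 1)) α ℝ)
    (A : Matrix (Fin (n + 1)) (Fin (n + 1)) ℝ) (c : Fin (n + 1) → ℝ) (r : Fin (n + 1) → ℕ) :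
    permB β (big B U V A c r) =
    permB β (blk (big B (fun i k => U i k.succ) (fun k j => V k.succ j)
      (fun k l => A k.succ l.succ) (fun k => c k.succ) (fun k => r k.succ))
      (Sum.elim (fun i => U i 0) (fun k => A k.1.succ 0))
      (Sum.elim (fun i => V 0 i) (fun k => A 0 k.1.succ)) (A 0 0) (c 0) (r 0)) := by
  symm
  refine permB_of_equiv β (sigEquiv α r) _ _ ?_
  rintro ((i | ⟨i, k⟩) | k) ((j | ⟨j, l⟩) | l)
  · rfl
  · rfl
  · rfl
  · rfl
  · change A i.succ j.succ + (if (⟨i, k⟩ : (i : Fin n) × Fin (r i.succ)) = ⟨j, l⟩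
        then c i.succ else 0) = A i.succ j.succ +
        (if (⟨i.succ, k⟩ : (i : Fin (n + 1)) × Fin (r i)) = ⟨j.succ, l⟩ then c i.succ else 0)
    congr 1
    by_cases hij : i = j
    · subst hij
      simp
    · simp [hij]
  · rw [blk_lr, sigEquiv_b, sigEquiv_c, big_rr]
    simp [Fin.succ_ne_zero]
  · rfl
  · rw [blk_rl, sigEquiv_b, sigEquiv_c, big_rr]
    simp [(Fin.succ_ne_zero _).symm]
  · rw [blk_rr, sigEquiv_c, sigEquiv_c, big_rr]
    simp

/-- Schur complement of the index `0`. -/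
def schur {n : ℕ} (A : Matrix (Fin (n + 1)) (Fin (n + 1)) ℝ) : Matrix (Fin n) (Fin n) ℝ :=
  fun i j => A i.succ j.succ + (1 - A 0 0)⁻¹ * (A i.succ 0 * A 0 j.succ)

theorem det_schur {n : ℕ} (A : Matrix (Fin (n + 1)) (Fin (n + 1)) ℝ) (h : 1 - A 0 0 ≠ 0) :
    (1 - A).det = (1 - A 0 0) * (1 - schur A).det := by
  let e : Unit ⊕ Fin n ≃ Fin (n + 1) := Equiv.ofBijective (Sum.elim (fun _ => 0) Fin.succ) (by
    constructor
    · rintro (i | i) (j | j) hij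
      · rfl
      · simp [(Fin.succ_ne_zero _).symm] at hij
      · simp [(Fin.succ_ne_zero _)] at hij
      · simpa using hij
    · intro i
      refine Fin.cases ⟨Sum.inl (), rfl⟩ (fun i => ⟨Sum.inr i, rfl⟩) i)
  have el : ∀ x, e (Sum.inl x) = 0 := fun _ => rfl
  have er : ∀ x, e (Sum.inr x) = x.succ := fun _ => rfl
  let D : Matrix Unit Unit ℝ := Matrix.of fun _ _ => 1 - A 0 0
  let Di : Matrix Unit Unit ℝ := Matrix.of fun _ _ => (1 - A 0 0)⁻¹
  let _ : Invertible D := ⟨Di, by ext; simp [D, Di, Matrix.mul_apply, h], by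
    ext; simp [D, Di, Matrix.mul_apply, h]⟩
  have hinv : ⅟D = Di := rfl
  rw [← Matrix.det_submatrix_equiv_self e]
  have hb : (1 - A).submatrix e e = Matrix.fromBlocks D (Matrix.of fun _ j => - A 0 j.succ)
      (Matrix.of fun i _ => - A i.succ 0)
      (Matrix.of fun i j => (1 : Matrix (Fin n) (Fin n) ℝ) i j - A i.succ j.succ) := by
    ext (i | i) (j | j)
    · simp [el, D]
    · simp [el, er, Matrix.one_apply, (Fin.succ_ne_zero _).symm]
    · simp [el, er, Matrix.one_apply, (Fin.succ_ne_zero _)]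
    · simp [er, Matrix.one_apply]
  rw [hb, Matrix.det_fromBlocks₁₁, hinv]
  congr 1
  · simp [D]
  · congr 1
    ext i j
    simp [schur, Di, Matrix.mul_apply]
    ring

theorem inv_schur {α : Type} [Fintype α] [DecidableEq α] {n : ℕ}
    (U : Matrix α (Fin (n + 1)) ℝ) (V : Matrix (Fin (n + 1)) α ℝ)
    (A : Matrix (Fin (n + 1)) (Fin (n + 1)) ℝ) (h : 1 - A 0 0 ≠ 0) (h1 : (1 - A).det ≠ 0)
    (h2 : (1 - schur A).det ≠ 0) (i j : α) :
    (U * (1 - A)⁻¹ * V) i j = (1 - A 0 0)⁻¹ * (U i 0 * V 0 j) +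
      ((Matrix.of (fun i (k : Fin n) => U i k.succ + (1 - A 0 0)⁻¹ * (U i 0 * A 0 k.succ)) :
          Matrix α (Fin n) ℝ) *
        (1 - schur A)⁻¹ * (Matrix.of (fun (k : Fin n) j =>
          V k.succ j + (1 - A 0 0)⁻¹ * (A k.succ 0 * V 0 j)) : Matrix (Fin n) α ℝ)) i j := by
  set Y := (1 - A)⁻¹ * V with hY
  have hYV : (1 - A) * Y = V := by
    rw [hY, ← Matrix.mul_assoc, Matrix.mul_nonsing_inv _ (isUnit_iff_ne_zero.2 h1), Matrix.one_mul]
  have hY0 : ∀ j, Y 0 j = (1 - A 0 0)⁻¹ * (V 0 j + ∑ k : Fin n, A 0 k.succ * Y k.succ j) := by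
    intro j
    have := congrFun (congrFun hYV 0) j
    rw [Matrix.sub_mul, Matrix.one_mul, Matrix.sub_apply, Matrix.mul_apply,
      Fin.sum_univ_succ] at this
    rw [eq_inv_mul_iff_mul_eq₀ h]
    linear_combination this
  have hYs : ∀ (i : Fin n) j, Y i.succ j = V i.succ j + A i.succ 0 * Y 0 j +
      ∑ k : Fin n, A i.succ k.succ * Y k.succ j := by
    intro i j
    have := congrFun (congrFun hYV i.succ) j
    rw [Matrix.sub_mul, Matrix.one_mul, Matrix.sub_apply, Matrix.mul_apply,
      Fin.sum_univ_succ] at this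
    linear_combination this
  have hS : (1 - schur A) * (Matrix.of fun (k : Fin n) j => Y k.succ j) =
      Matrix.of (fun (k : Fin n) j => V k.succ j + (1 - A 0 0)⁻¹ * (A k.succ 0 * V 0 j)) := by
    ext i j
    rw [Matrix.sub_mul, Matrix.one_mul, Matrix.sub_apply, Matrix.mul_apply]
    simp only [Matrix.of_apply, schur, add_mul, Finset.sum_add_distrib]
    rw [hYs i j, hY0 j]
    have : ∑ x : Fin n, (1 - A 0 0)⁻¹ * (A i.succ 0 * A 0 x.succ) * Y x.succ j
        = (1 - A 0 0)⁻¹ * A i.succ 0 * ∑ k : Fin n, A 0 k.succ * Y k.succ j := by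
      rw [Finset.mul_sum]
      exact Finset.sum_congr rfl fun _ _ => by ring
    rw [this]
    ring
  rw [← hS, Matrix.mul_assoc, Matrix.mul_assoc, ← Matrix.mul_assoc (1 - schur A)⁻¹,
    Matrix.nonsing_inv_mul _ (isUnit_iff_ne_zero.2 h2), Matrix.one_mul, ← hY, Matrix.mul_apply,
    Fin.sum_univ_succ, Matrix.mul_apply]
  simp only [Matrix.of_apply, add_mul, Finset.sum_add_distrib]
  have : ∑ x : Fin n, (1 - A 0 0)⁻¹ * (U i 0 * A 0 x.succ) * Y x.succ j
      = (1 - A 0 0)⁻¹ * U i 0 * ∑ k : Fin n, A 0 k.succ * Y k.succ j := by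
    rw [Finset.mul_sum]
    exact Finset.sum_congr rfl fun _ _ => by ring
  rw [this, hY0 j]
  ring

/-- The general term of the multiple series. -/
def serTerm {n : ℕ} (β : ℝ) {α : Type} [Fintype α] [DecidableEq α] (B : Matrix α α ℝ)
    (U : Matrix α (Fin n) ℝ) (V : Matrix (Fin n) α ℝ) (A : Matrix (Fin n) (Fin n) ℝ)
    (c : Fin n → ℝ) (r : Fin n → ℕ) : ℝ :=
  ((∏ i, (r i).factorial : ℕ) : ℝ)⁻¹ * permB β (big B U V A c r)

/-- The closed form of the multiple series. -/
def total {n : ℕ} (β : ℝ) {α : Type} [Fintype α] [DecidableEq α] (B : Matrix α α ℝ)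
    (U : Matrix α (Fin n) ℝ) (V : Matrix (Fin n) α ℝ) (A : Matrix (Fin n) (Fin n) ℝ)
    (c : Fin n → ℝ) : ℝ :=
  Real.exp (β * ∑ i, c i) * (permB β (B + U * (1 - A)⁻¹ * V) / (1 - A).det ^ β)

/-- The identity holds for `A`. -/
def Good {n : ℕ} (A : Matrix (Fin n) (Fin n) ℝ) : Prop :=
  0 < (1 - A).det ∧ ∀ (β : ℝ) (α : Type) [Fintype α] [DecidableEq α] (B : Matrix α α ℝ)
    (U : Matrix α (Fin n) ℝ) (V : Matrix (Fin n) α ℝ) (c : Fin n → ℝ),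
    HasSum (serTerm β B U V A c) (total β B U V A c)

theorem step_det {n : ℕ} (A : Matrix (Fin (n + 1)) (Fin (n + 1)) ℝ) (ha : |A 0 0| < 1)
    (hS : Good (schur A)) : 0 < (1 - A).det := by
  have h : 0 < 1 - A 0 0 := by have := (abs_lt.1 ha).2; linarith
  rw [det_schur A h.ne']
  exact mul_pos h hS.1

theorem step_fib {n : ℕ} (A : Matrix (Fin (n + 1)) (Fin (n + 1)) ℝ) (ha : |A 0 0| < 1)
    (hS : Good (schur A)) (β : ℝ) (α : Type) [Fintype α] [DecidableEq α] (B : Matrix α α ℝ)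
    (U : Matrix α (Fin (n + 1)) ℝ) (V : Matrix (Fin (n + 1)) α ℝ) (c : Fin (n + 1) → ℝ) :
    ∃ G : (Fin n → ℕ) → ℝ, (∀ r, HasSum (fun m : ℕ => serTerm β B U V A c (Fin.cons m r)) (G r)) ∧
      HasSum G (total β B U V A c) := by
  have h : 0 < 1 - A 0 0 := by have := (abs_lt.1 ha).2; linarith
  let B' : Matrix α α ℝ := Matrix.of fun i j => B i j + (1 - A 0 0)⁻¹ * (U i 0 * V 0 j)
  let U' : Matrix α (Fin n) ℝ :=
    Matrix.of (fun i (k : Fin n) => U i k.succ + (1 - A 0 0)⁻¹ * (U i 0 * A 0 k.succ))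
  let V' : Matrix (Fin n) α ℝ :=
    Matrix.of (fun (k : Fin n) j => V k.succ j + (1 - A 0 0)⁻¹ * (A k.succ 0 * V 0 j))
  let K : ℝ := Real.exp (β * c 0) / (1 - A 0 0) ^ β
  refine ⟨fun r => K * serTerm β B' U' V' (schur A) (fun k => c k.succ) r, fun r => ?_, ?_⟩
  · have h1 := (hasSum_blk β (A 0 0) (c 0) ha
      (big B (fun i k => U i k.succ) (fun k j => V k.succ j)
      (fun k l => A k.succ l.succ) (fun k => c k.succ) r)
      (Sum.elim (fun i => U i 0) (fun k => A k.1.succ 0))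
      (Sum.elim (fun i => V 0 i) (fun k => A 0 k.1.succ))).mul_left
        (((∏ i, (r i).factorial : ℕ) : ℝ)⁻¹)
    refine hs_of h1 (fun m => ?_) ?_
    · have hp : permB β (big B U V A c (Fin.cons m r)) = permB β (blk
          (big B (fun i k => U i k.succ) (fun k j => V k.succ j)
            (fun k l => A k.succ l.succ) (fun k => c k.succ) r)
          (Sum.elim (fun i => U i 0) (fun k => A k.1.succ 0))
          (Sum.elim (fun i => V 0 i) (fun k => A 0 k.1.succ)) (A 0 0) (c 0) m) :=
        permB_big_succ β B U V A c (Fin.cons m r)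
      unfold serTerm
      rw [hp, Fin.prod_univ_succ]
      push_cast
      rw [mul_inv]
      simp only [Fin.cons_zero, Fin.cons_succ]
      ring
    · change K * (((∏ i, (r i).factorial : ℕ) : ℝ)⁻¹ *
        permB β (big B' U' V' (schur A) (fun k => c k.succ) r)) = _
      have hm : big B' U' V' (schur A) (fun k => c k.succ) r = (fun i j =>
          (big B (fun i k => U i k.succ) (fun k j => V k.succ j)
            (fun k l => A k.succ l.succ) (fun k => c k.succ) r) i j + (1 - A 0 0)⁻¹ *
            ((Sum.elim (fun i => U i 0) (fun k => A k.1.succ 0) : _ → ℝ) i *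
              (Sum.elim (fun i => V 0 i) (fun k => A 0 k.1.succ) : _ → ℝ) j)) := by
        ext (i | k) (j | l)
        · rfl
        · rfl
        · rfl
        · change A k.1.succ l.1.succ + (1 - A 0 0)⁻¹ * (A k.1.succ 0 * A 0 l.1.succ) +
            (if k = l then c k.1.succ else 0) = A k.1.succ l.1.succ +
            (if k = l then c k.1.succ else 0) + (1 - A 0 0)⁻¹ * (A k.1.succ 0 * A 0 l.1.succ)
          ring
      rw [congrArg (permB β) hm]
      simp only [K]
      ring
  · refine hs_of ((hS.2 β α B' U' V' (fun k => c k.succ)).mul_left K) (fun _ => rfl) ?_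
    unfold total
    have hB : B + U * (1 - A)⁻¹ * V = B' + U' * (1 - schur A)⁻¹ * V' := by
      ext i j
      rw [Matrix.add_apply, inv_schur U V A h.ne' (step_det A ha hS).ne' hS.1.ne' i j,
        Matrix.add_apply]
      simp only [B', Matrix.of_apply, add_assoc]
      rfl
    rw [hB, det_schur A h.ne', Real.mul_rpow h.le hS.1.le, Fin.sum_univ_succ, mul_add, Real.exp_add]
    simp only [K]
    field_simp

theorem step_good {n : ℕ} (A : Matrix (Fin (n + 1)) (Fin (n + 1)) ℝ) (ha : |A 0 0| < 1)
    (hS : Good (schur A)) (hS' : Good (schur (A.map abs))) : Good A := by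
  refine ⟨step_det A ha hS, fun β α _ _ B U V c => ?_⟩
  obtain ⟨G, hG1, hG2⟩ := step_fib A ha hS β α B U V c
  obtain ⟨G', hG1', hG2'⟩ := step_fib (A.map abs) (by simpa using ha) hS' |β| α (B.map abs)
    (U.map abs) (V.map abs) (fun i => |c i|)
  let e : (Fin n → ℕ) × ℕ ≃ (Fin (n + 1) → ℕ) :=
    (Equiv.prodComm _ _).trans (Fin.consEquiv (fun _ => ℕ))
  have he : ∀ p, e p = Fin.cons p.2 p.1 := fun _ => rfl
  have hle : ∀ r, |serTerm β B U V A c r| ≤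
      serTerm |β| (B.map abs) (U.map abs) (V.map abs) (A.map abs) (fun i => |c i|) r := by
    intro r
    unfold serTerm
    rw [abs_mul, abs_of_nonneg (by positivity : (0 : ℝ) ≤ ((∏ i, (r i).factorial : ℕ) : ℝ)⁻¹)]
    refine mul_le_mul_of_nonneg_left (abs_permB_le _ _ _ ?_) (by positivity)
    rintro (i | k) (j | l)
    · simp
    · simp
    · simp
    · simp only [big_rr, Matrix.map_apply]
      refine (abs_add_le _ _).trans (add_le_add le_rfl ?_)
      split_ifs <;> simp
  have hs' : Summable (fun p : (Fin n → ℕ) × ℕ =>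
      serTerm |β| (B.map abs) (U.map abs) (V.map abs) (A.map abs) (fun i => |c i|)
        (Fin.cons p.2 p.1)) := by
    rw [summable_prod_of_nonneg (fun p => (abs_nonneg _).trans (hle _))]
    refine ⟨fun r => (hG1' r).summable, ?_⟩
    have : (fun r => ∑' m, serTerm |β| (B.map abs) (U.map abs) (V.map abs) (A.map abs)
      (fun i => |c i|) (Fin.cons m r)) = G' := funext fun r => (hG1' r).tsum_eq
    exact this ▸ hG2'.summable
  have hs : Summable (fun p : (Fin n → ℕ) × ℕ => serTerm β B U V A c (Fin.cons p.2 p.1)) :=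
    Summable.of_norm_bounded hs' (fun p => by rw [Real.norm_eq_abs]; exact hle _)
  have h3 := hs.hasSum.prod_fiberwise hG1
  have h4 := hs.hasSum
  rw [h3.unique hG2] at h4
  exact (e.hasSum_iff).1 h4

theorem good_zero (A : Matrix (Fin 0) (Fin 0) ℝ) : Good A := by
  refine ⟨by simp, fun β α _ _ B U V c => ?_⟩
  have h := hasSum_unique (serTerm β B U V A c)
  refine hs_of h (fun _ => rfl) ?_
  unfold serTerm total
  have h1 : B + U * (1 - A)⁻¹ * V = B := by
    ext i j
    simp
  rw [h1]
  have h2 : ∀ r, permB β (big B U V A c r) = permB β B := by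
    intro r
    refine permB_of_equiv β (Equiv.sumEmpty α _) _ _ ?_
    rintro (i | k) (j | l)
    · rfl
    · exact l.1.elim0
    · exact k.1.elim0
    · exact k.1.elim0
  rw [h2]
  simp

theorem good_small (n : ℕ) : ∀ A : Matrix (Fin n) (Fin n) ℝ,
    (∀ i j, |A i j| < (1 / 2) ^ (n + 1)) → Good A := by
  induction n with
  | zero => intro A _; exact good_zero A
  | succ n ih =>
    intro A hA
    have key : ∀ A : Matrix (Fin (n + 1)) (Fin (n + 1)) ℝ,
        (∀ i j, |A i j| < (1 / 2) ^ (n + 1 + 1)) → Good (schur A) := by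
      intro A hA
      apply ih
      intro i j
      have hp : (0 : ℝ) < (1 / 2) ^ (n + 1) := by positivity
      have hp1 : (1 / 2 : ℝ) ^ (n + 1) ≤ 1 / 2 := by
        rw [pow_succ]
        have : (1 / 2 : ℝ) ^ n ≤ 1 := pow_le_one₀ (by norm_num) (by norm_num)
        linarith
      have e1 : (1 / 2 : ℝ) ^ (n + 1 + 1) = (1 / 2) ^ (n + 1) / 2 := by rw [pow_succ]; ring
      rw [e1] at hA
      generalize (1 / 2 : ℝ) ^ (n + 1) = δ at *
      have h00 := abs_lt.1 (hA 0 0)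
      have hinv : (1 - A 0 0)⁻¹ ≤ 2 := by
        rw [inv_le_comm₀ (by linarith) (by norm_num)]
        linarith
      have hinv0 : 0 ≤ (1 - A 0 0)⁻¹ := inv_nonneg.2 (by linarith)
      unfold schur
      calc |A i.succ j.succ + (1 - A 0 0)⁻¹ * (A i.succ 0 * A 0 j.succ)|
          ≤ |A i.succ j.succ| + (1 - A 0 0)⁻¹ * (|A i.succ 0| * |A 0 j.succ|) := by
            refine (abs_add_le _ _).trans ?_
            rw [abs_mul, abs_mul, abs_of_nonneg hinv0]
        _ ≤ |A i.succ j.succ| + 2 * (δ / 2 * (δ / 2)) := by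
            gcongr
            · exact (hA _ _).le
            · exact (hA _ _).le
        _ < δ := by
            have := hA i.succ j.succ
            nlinarith
    refine step_good A ?_ (key A hA) (key _ (fun i j => by simpa using hA i j))
    refine (hA 0 0).trans_le (pow_le_one₀ (by norm_num) (by norm_num))

theorem dpermB_eq {α : Type*} [Fintype α] [DecidableEq α] (β : ℝ) (M N : Matrix α α ℝ)
    (h0 : ∀ i, N i i = 0) (h1 : ∀ i j, i ≠ j → N i j = M i j) : dpermB β M = permB β N := by
  unfold dpermB permB
  rw [Finset.sum_filter]
  refine Finset.sum_congr rfl fun π _ => ?_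
  split_ifs with h
  · congr 1
    exact Finset.prod_congr rfl fun i _ => (h1 _ _ (h i).symm).symm
  · push Not at h
    obtain ⟨x, hx⟩ := h
    rw [Finset.prod_eq_zero (Finset.mem_univ x) (by rw [hx, h0]), mul_zero]

section geom
attribute [local instance] Matrix.linftyOpNormedRing Matrix.linftyOpNormedAlgebra

theorem geom_inv {n : ℕ} (A : Matrix (Fin n) (Fin n) ℝ)
    (hA : ∀ i j, |A i j| < (1 / 2) ^ (n + 1)) : ∑' k : ℕ, A ^ k = (1 - A)⁻¹ := by
  have hn : ‖A‖ < 1 := by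
    rw [Matrix.linfty_opNorm_def]
    have : (Finset.univ.sup fun i => ∑ j, ‖A i j‖₊) < 1 := by
      rw [Finset.sup_lt_iff (by simp)]
      intro i _
      rw [← NNReal.coe_lt_coe]
      push_cast
      calc ∑ j, ‖A i j‖ ≤ ∑ j : Fin n, (1 / 2 : ℝ) ^ (n + 1) :=
            Finset.sum_le_sum fun j _ => (hA i j).le
        _ = n * (1 / 2) ^ (n + 1) := by simp
        _ < 1 := by
            have h2 : (n : ℝ) < 2 ^ (n + 1) := by
              exact_mod_cast (Nat.lt_succ_self n).trans (Nat.lt_two_pow_self)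
            rw [one_div, inv_pow, ← div_eq_mul_inv, div_lt_one (by positivity)]
            exact h2
    exact_mod_cast this
  have hs : Summable (fun k : ℕ => A ^ k) := summable_geometric_of_norm_lt_one hn
  refine (Matrix.inv_eq_left_inv ?_).symm
  exact hs.tsum_pow_mul_one_sub
end geom

end helpers

/-- The Submatrix Derangement MacMahon Master Theorem, for small `A`, with
`B̂ = B - diag B + U(I-A)⁻¹V` and `(I-A)⁻¹ = Σ_{k≥0} A^k`. -/
theorem submatrix_derangement_MMT (n' n : ℕ) (β : ℝ) :
    ∃ ε > (0 : ℝ), ∀ (B : Matrix (Fin n') (Fin n') ℝ) (U : Matrix (Fin n') (Fin n) ℝ)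
      (V : Matrix (Fin n) (Fin n') ℝ) (A : Matrix (Fin n) (Fin n) ℝ),
      (∀ i j, |A i j| < ε) →
      ∑' r : Fin n → ℕ, ((∏ i, (r i).factorial : ℕ) : ℝ)⁻¹ *
          dpermB β (Matrix.fromBlocks B (repU U r) (repV V r) (repA A r))
        = Real.exp (-β * Matrix.trace A) *
            permB β (B - Matrix.diagonal (fun i' => B i' i') + U * (∑' k : ℕ, A ^ k) * V)
            / Matrix.det (1 - A) ^ β := by
  refine ⟨(1 / 2) ^ (n + 1), by positivity, fun B U V A hA => ?_⟩
  rw [geom_inv A hA]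
  have h := ((good_small n A hA).2 β (Fin n') (B - Matrix.diagonal (fun i' => B i' i')) U V
    (fun i => - A i i)).tsum_eq
  have ht : ∀ r : Fin n → ℕ, ((∏ i, (r i).factorial : ℕ) : ℝ)⁻¹ *
      dpermB β (Matrix.fromBlocks B (repU U r) (repV V r) (repA A r)) =
      serTerm β (B - Matrix.diagonal (fun i' => B i' i')) U V A (fun i => - A i i) r := by
    intro r
    unfold serTerm
    congr 1
    refine dpermB_eq β _ _ ?_ ?_
    · rintro (i | k)
      · simp
      · simp
    · rintro (i | k) (j | l) hij
      · have : i ≠ j := fun h => hij (by rw [h])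
        simp [this]
      · rfl
      · rfl
      · have : k ≠ l := fun h => hij (by rw [h])
        simp [this, repA]
  rw [tsum_congr ht, h]
  unfold total
  rw [Finset.sum_neg_distrib, mul_neg, ← neg_mul, mul_div_assoc]
  rfl
end
end
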